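/- For every rational number α with 0 < α < 1 there exists a real constant c > 0 (depending only on α) such that for every positive integer n and every collection of n step-function probability measures μ_1, ..., μ_n on [0,1], there exist a natural number m with m ≤ (2 − c)·n (as real numbers) and a set A ⊆ [0,1] achievable with m cuts such that μ_i(A) = α for every i ∈ {1, ..., n}. -/

import Mathlib

/-!
Call a ratio `α` good if, for some `c > 0`, any `n` atomless probability measures on `[0,1]` have
a common open set of measure `α` with at most `(2 - c) * n` boundary points in `(0,1)`. Counting boundary
points rather than cuts makes three facts easy. The ratio `1` is good. If `α` is good, so is
`1 - α`. If `α` is good and `p` is prime, then `α / p` is good: split a set of ratio `α` equally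
into `p` parts with `(p - 1) * n` cuts; each cut is a boundary point of at most two parts, so on
average a part has at most `(2 - c / p) * n` boundary points (`GoodRatio.div_prime`). Since
`a / b = (1 - r / b) / q` when `b = q * a + r`, induction on the numerator shows that every rational
in `(0,1]` is good (`goodRatio_div`).

The equal splitting of `n` atomless measures into `p` parts with `(p - 1) * n` cuts
(`measure_splitting`) follows by compactness from a discrete version for weighted words
(`discrete_splitting`). If the latter failed, recording which parts are overweight for which measure
would give a `ZMod p`-equivariant map from the words with at most `N = (p - 1) * n` cuts, an
`N`-dimensional and highly connected free space, to a join of `n` boundaries of `(p - 1)`-simplices,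
which has dimension `N - 1`. Such a map does not exist by the argument of Dold, which is carried out
by hand in `exists_nondegen`: sweeping one label across the line contracts the space of words at the
price of one extra cut and so produces chains `sig k`, linked by the differentials of the standard
resolution of `ZMod p`; these pair nontrivially with the pullbacks of the cochains built in
`exists_cochains`, but in degree `N` the pullback vanishes for dimension reasons.
-/

open MeasureTheory
open scoped ENNReal

/-- A step-function probability measure on `[0,1]`: a Borel probability measure on `ℝ`
that is absolutely continuous w.r.t. Lebesgue measure with a piecewise constant density
supported in `[0,1]`. -/
def IsStepMeasure (μ : Measure ℝ) : Prop :=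
  IsProbabilityMeasure μ ∧
  ∃ (n : ℕ) (a b : Fin n → ℝ) (c : Fin n → ℝ≥0∞),
    (∀ i, 0 ≤ a i ∧ b i ≤ 1) ∧
    μ = volume.withDensity
      (fun x => ∑ i, Set.indicator (Set.Ico (a i) (b i)) (fun _ => c i) x)

/-- `A ⊆ [0,1]` is achievable with `m` cuts: there are points
`0 = y_0 ≤ y_1 ≤ ... ≤ y_m ≤ y_{m+1} = 1` such that `A` is the union of some
subcollection of the `m+1` closed intervals determined by these points. -/
def AchievableWithCuts (m : ℕ) (A : Set ℝ) : Prop :=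
  ∃ y : Fin (m + 2) → ℝ, Monotone y ∧ y 0 = 0 ∧ y (Fin.last (m + 1)) = 1 ∧
    ∃ S : Finset (Fin (m + 1)), A = ⋃ i ∈ S, Set.Icc (y i.castSucc) (y i.succ)

set_option linter.unusedSectionVars false

namespace ICD

/-! ### Cochains on lists -/

section Cochains

variable {F W Q : Type*} [CommRing F]

/-- The coboundary evaluated at a list, as a linear functional on cochains: the alternating sum
over all ways of deleting one entry, organised by recursion on the list. -/
def cobAt : List W → (List W → F) →ₗ[F] F
  | [] => 0
  | x :: l => LinearMap.proj l - (cobAt l).comp (LinearMap.funLeft F F (List.cons x))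

/-- The coboundary of a cochain. A cochain is an arbitrary function on lists of vertices; lists of
length `k + 1` play the role of `k`-simplices, and all degrees are kept in one function. -/
def cob : (List W → F) →ₗ[F] (List W → F) := LinearMap.pi cobAt

/-- The pullback of cochains along a vertex map. -/
def pull (f : W → Q) : (List Q → F) →ₗ[F] (List W → F) := LinearMap.funLeft F F (List.map f)

/-- The prism operator of the pair `f, g` evaluated at a list `[x₀, …, x_k]`: the alternating sum
of the values at `[f x₀, …, f x_i, g x_i, …, g x_k]`. -/
def prismAt (f g : W → W) : List W → (List W → F) →ₗ[F] F
  | [] => 0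
  | x :: l => LinearMap.proj (f x :: g x :: l.map g) -
      (prismAt f g l).comp (LinearMap.funLeft F F (List.cons (f x)))

/-- The prism operator, a cochain homotopy between the pullbacks along `f` and `g`. -/
def prism (f g : W → W) : (List W → F) →ₗ[F] (List W → F) := LinearMap.pi (prismAt f g)

@[simp] lemma cob_nil (e : List W → F) : cob e [] = 0 := rfl

lemma cob_cons (e : List W → F) (x : W) (l : List W) :
    cob e (x :: l) = e l - cob (fun l' => e (x :: l')) l := rfl

@[simp] lemma pull_apply (f : W → Q) (e : List Q → F) (l : List W) :
    pull f e l = e (l.map f) := rfl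

@[simp] lemma prism_nil (f g : W → W) (e : List W → F) : prism f g e [] = 0 := rfl

lemma prism_cons (f g : W → W) (e : List W → F) (x : W) (l : List W) :
    prism f g e (x :: l) =
      e (f x :: g x :: l.map g) - prism f g (fun l' => e (f x :: l')) l := rfl

lemma cob_pull (f : W → Q) (e : List Q → F) : cob (pull f e) = pull f (cob e) := by
  funext l
  induction l generalizing e with
  | nil => rfl
  | cons x l ih =>
    have := ih (fun l' => e (f x :: l'))
    simp only [cob_cons, pull_apply, List.map_cons] at this ⊢
    rw [← this]; rfl

lemma cob_cob (e : List W → F) : cob (cob e) = 0 := by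
  funext l
  induction l generalizing e with
  | nil => rfl
  | cons x l ih =>
    have h1 : (fun l' => cob e (x :: l')) = e - cob (fun l' => e (x :: l')) := by
      funext l'; rfl
    rw [cob_cons, h1, map_sub, Pi.sub_apply, ih]
    simp

lemma cob_prism (f g : W → W) (e : List W → F) :
    cob (prism f g e) + prism f g (cob e) = pull g e - pull f e := by
  funext l
  induction l generalizing e with
  | nil => simp
  | cons x l ih =>
    have h1 : (fun l' => prism f g e (x :: l')) =
        pull g (fun l' => e (f x :: g x :: l')) - prism f g (fun l' => e (f x :: l')) := by
      funext l'; rfl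
    have h2 : (fun l' => cob e (f x :: l')) = e - cob (fun l' => e (f x :: l')) := by
      funext l'; rfl
    have h3 := ih (fun l' => e (f x :: l'))
    simp only [Pi.add_apply, Pi.sub_apply, pull_apply] at h3
    rw [Pi.add_apply, cob_cons, h1, prism_cons, h2, map_sub, map_sub, cob_pull]
    simp only [Pi.sub_apply, pull_apply, cob_cons, List.map_cons]
    linear_combination h3

lemma cob_congr {e e' : List W → F} {k : ℕ} (h : ∀ l : List W, l.length = k → e l = e' l)
    (l : List W) (hl : l.length = k + 1) : cob e l = cob e' l := by
  induction l generalizing e e' k with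
  | nil => rfl
  | cons x l ih =>
    simp only [List.length_cons, Nat.add_right_cancel_iff] at hl
    rw [cob_cons, cob_cons, h l hl]
    cases l with
    | nil => rfl
    | cons y l =>
      obtain ⟨k, rfl⟩ : ∃ k', k = k' + 1 := ⟨l.length, by simpa using hl.symm⟩
      rw [ih (k := k) (fun l' hl' => h _ (by simpa using hl')) hl]

/-- A list with two equal neighbours. -/
def Degen (l : List Q) : Prop := ∃ a x b, l = a ++ x :: x :: b

lemma cob_degen {e : List Q → F} (h : ∀ l, Degen l → e l = 0) (l : List Q) (hl : Degen l) :
    cob e l = 0 := by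
  obtain ⟨a, x, b, rfl⟩ := hl
  induction a generalizing e with
  | nil =>
    have : (fun l' => e (x :: x :: l')) = 0 := by
      funext l'; exact h _ ⟨[], x, l', rfl⟩
    simp [cob_cons, this]
  | cons y a ih =>
    rw [List.cons_append, cob_cons, h _ ⟨a, x, b, rfl⟩, ih, sub_zero]
    rintro _ ⟨a', x', b', rfl⟩
    exact h _ ⟨y :: a', x', b', rfl⟩

end Cochains

/-! ### Cochains and the action of `ZMod p` -/

section Equivariant

variable {p : ℕ} [Fact p.Prime] {W Q : Type*} [AddAction (ZMod p) W] [AddAction (ZMod p) Q]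

/-- Translation of cochains by a group element. -/
def T (x : ZMod p) : (List W → ZMod p) →ₗ[ZMod p] (List W → ZMod p) := pull (x +ᵥ ·)

/-- The norm: the sum of all translates of a cochain. -/
def Nm : (List W → ZMod p) →ₗ[ZMod p] (List W → ZMod p) := ∑ x : ZMod p, T x

variable (p) in
/-- The differentials of the standard periodic resolution of `ZMod p`: translation minus the
identity in even degrees, the norm in odd degrees. -/
def Dif (k : ℕ) : (List W → ZMod p) →ₗ[ZMod p] (List W → ZMod p) :=
  if Even k then T 1 - LinearMap.id else Nm

lemma T_apply (x : ZMod p) (e : List W → ZMod p) (l : List W) :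
    T x e l = e (l.map (x +ᵥ ·)) := rfl

lemma Nm_eq (e : List W → ZMod p) : Nm e = ∑ x : ZMod p, T x e := by
  simp [Nm]

lemma Nm_apply (e : List W → ZMod p) (l : List W) :
    Nm e l = ∑ x : ZMod p, e (l.map (x +ᵥ ·)) := by
  simp [Nm, T_apply]

lemma T_T (x y : ZMod p) (e : List W → ZMod p) : T x (T y e) = T (x + y) e := by
  funext l
  simp only [T_apply, List.map_map]
  congr 2
  funext w
  simp [vadd_vadd, add_comm]

lemma T_zero (e : List W → ZMod p) : T (0 : ZMod p) e = e := by
  funext l; simp [T_apply]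

lemma Nm_T (x : ZMod p) (e : List W → ZMod p) : Nm (T x e) = Nm e := by
  simp only [Nm_eq, T_T]
  exact Fintype.sum_equiv (Equiv.addRight x) _ _ (fun _ => rfl)

lemma T_Nm (x : ZMod p) (e : List W → ZMod p) : T x (Nm e) = Nm e := by
  simp only [Nm_eq, T_T, map_sum]
  exact Fintype.sum_equiv (Equiv.addLeft x) _ _ (fun _ => rfl)

lemma cob_T (x : ZMod p) (e : List W → ZMod p) : cob (T x e) = T x (cob e) := cob_pull _ _

lemma cob_Nm (e : List W → ZMod p) : cob (Nm e) = Nm (cob e) := by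
  simp only [Nm_eq, map_sum, cob_T]

lemma Dif_even {k : ℕ} (hk : Even k) (e : List W → ZMod p) : Dif p k e = T 1 e - e := by
  simp [Dif, hk]

lemma Dif_odd {k : ℕ} (hk : ¬ Even k) (e : List W → ZMod p) : Dif p k e = Nm e := by
  simp [Dif, hk]

lemma cob_Dif (k : ℕ) (e : List W → ZMod p) : cob (Dif p k e) = Dif p k (cob e) := by
  by_cases hk : Even k
  · simp [Dif_even hk, cob_T]
  · simp [Dif_odd hk, cob_Nm]

lemma T_Dif (k : ℕ) (x : ZMod p) (e : List W → ZMod p) : T x (Dif p k e) = Dif p k (T x e) := by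
  by_cases hk : Even k
  · simp [Dif_even hk, T_T, add_comm]
  · simp [Dif_odd hk, T_Nm, Nm_T]

lemma Dif_Dif (k : ℕ) (e : List W → ZMod p) : Dif p k (Dif p (k + 1) e) = 0 := by
  by_cases hk : Even k
  · have : ¬ Even (k + 1) := by simpa [Nat.even_add_one] using hk
    simp [Dif_even hk, Dif_odd this, T_Nm]
  · have : Even (k + 1) := by simpa [Nat.even_add_one] using hk
    simp [Dif_even this, Dif_odd hk, Nm_T]

/-- A translation invariant cochain is killed by the differentials; for the norm this is because
`p = 0` in `ZMod p`. -/
lemma Dif_of_invariant (k : ℕ) (e : List W → ZMod p) (h : ∀ x : ZMod p, T x e = e) :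
    Dif p k e = 0 := by
  by_cases hk : Even k
  · simp [Dif_even hk, h]
  · simp [Dif_odd hk, Nm_eq, h]

/-- The label of the first entry of a list, for a labelling `ρ` of the vertices. -/
def headIdx (ρ : Q → ZMod p) : List Q → ZMod p
  | [] => 0
  | q :: _ => ρ q

lemma headIdx_map {ρ : Q → ZMod p} (hρ : ∀ (x : ZMod p) q, ρ (x +ᵥ q) = ρ q + x) (x : ZMod p)
    (l : List Q) (hl : l ≠ []) : headIdx ρ (l.map (x +ᵥ ·)) = headIdx ρ l + x := by
  cases l with
  | nil => exact absurd rfl hl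
  | cons q l => exact hρ x q

lemma Degen.map {l : List Q} (h : Degen l) (x : ZMod p) : Degen (l.map (x +ᵥ ·)) := by
  obtain ⟨a, y, b, rfl⟩ := h
  exact ⟨a.map (x +ᵥ ·), x +ᵥ y, b.map (x +ᵥ ·), by simp⟩

/-- A cochain that is invariant at `l` is a norm there, as the action is free: keep the values on
the lists whose head has label `0`. -/
lemma solve_Nm {ρ : Q → ZMod p} (hρ : ∀ (x : ZMod p) q, ρ (x +ᵥ q) = ρ q + x)
    (f : List Q → ZMod p) (l : List Q) (hl : l ≠ [])
    (hf : ∀ x : ZMod p, T x f l = f l) :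
    Nm (fun l' => if headIdx ρ l' = 0 then f l' else 0) l = f l := by
  rw [Nm_apply]
  simp only [headIdx_map hρ _ l hl]
  have : ∀ x : ZMod p, (headIdx ρ l + x = 0) ↔ x = - headIdx ρ l := fun x => by
    rw [add_comm, eq_neg_iff_add_eq_zero]
  simp only [this, Finset.sum_ite_eq', Finset.mem_univ, if_true]
  exact hf _

/-- A cochain of vanishing norm at `l` is there of the form `T 1 h - h`: take for `h` partial sums
along the orbit. -/
lemma solve_sub {ρ : Q → ZMod p} (hρ : ∀ (x : ZMod p) q, ρ (x +ᵥ q) = ρ q + x)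
    (f : List Q → ZMod p) (l : List Q) (hl : l ≠ []) (hf : Nm f l = 0) :
    let h : List Q → ZMod p := fun l' =>
      ∑ j ∈ Finset.range (headIdx ρ l').val,
        f (l'.map (((j : ZMod p) - headIdx ρ l') +ᵥ ·))
    T 1 h l - h l = f l := by
  intro h
  have hp : p.Prime := Fact.out
  have hp1 : 1 < p := hp.one_lt
  set r := headIdx ρ l with hr
  have key : ∀ j : ZMod p, f ((l.map ((1 : ZMod p) +ᵥ ·)).map ((j - (r + 1)) +ᵥ ·)) =
      f (l.map ((j - r) +ᵥ ·)) := by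
    intro j
    rw [List.map_map]
    congr 2
    funext q
    simp only [Function.comp, vadd_vadd]
    congr 1; ring
  simp only [T_apply, h, headIdx_map hρ _ l hl, ← hr, key]
  have hlast : f (l.map (((r.val : ZMod p) - r) +ᵥ ·)) = f l := by
    simp
  by_cases hlt : r.val + 1 < p
  · have : (r + 1).val = r.val + 1 := by
      rw [ZMod.val_add, ZMod.val_one, Nat.mod_eq_of_lt hlt]
    rw [this, Finset.sum_range_succ, hlast]; ring
  · have hrp : r.val + 1 = p := by have := ZMod.val_lt r; omega
    have : (r + 1).val = 0 := by
      rw [ZMod.val_add, ZMod.val_one, hrp, Nat.mod_self]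
    rw [this, Finset.sum_range_zero]
    have hs : ∑ j ∈ Finset.range p, f (l.map (((j : ZMod p) - r) +ᵥ ·)) = 0 := by
      rw [← hf, Nm_apply]
      have h1 : ∑ x : ZMod p, f (l.map (x +ᵥ ·)) = ∑ x : ZMod p, f (l.map ((x - r) +ᵥ ·)) :=
        (Fintype.sum_equiv (Equiv.subRight r) _ _ (fun _ => rfl)).symm
      rw [h1]
      refine Finset.sum_bij (fun j _ => (j : ZMod p)) (by simp) ?_ ?_ (by simp)
      · intro a ha b hb hab
        rw [Finset.mem_range] at ha hb
        have := congrArg ZMod.val hab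
        rwa [ZMod.val_natCast_of_lt ha, ZMod.val_natCast_of_lt hb] at this
      · intro b _
        exact ⟨b.val, by simpa using ZMod.val_lt b, by simp⟩
    have hrange : Finset.range p = Finset.range (r.val + 1) := by rw [hrp]
    rw [hrange, Finset.sum_range_succ, hlast] at hs
    linear_combination -hs

/-- A free `ZMod p`-set (freeness is witnessed by an equivariant labelling `ρ`) carries normalised
cochains `e 0, e 1, …` in degrees `0, 1, …`, the first of norm one, linked by
`cob (e k) = Dif p k (e (k + 1))`. These are the pullbacks of the generators of the cohomology of
the group. -/
lemma exists_cochains (ρ : Q → ZMod p) (hρ : ∀ (x : ZMod p) q, ρ (x +ᵥ q) = ρ q + x) :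
    ∃ e : ℕ → List Q → ZMod p,
      (∀ q, Nm (e 0) [q] = 1) ∧
      (∀ k l, l.length = k + 2 → cob (e k) l = Dif p k (e (k + 1)) l) ∧
      (∀ k l, Degen l → e k l = 0) := by
  -- `P k e` is the criterion for the equation `cob e = Dif p k e'` to be solvable in degree `k + 1`,
  -- together with the normalisation of `e`.
  let P : ℕ → (List Q → ZMod p) → Prop := fun k e =>
    (∀ l, l.length = k + 2 → (if Even k then Nm (cob e) l = 0 else ∀ x : ZMod p, T x (cob e) l = cob e l)) ∧
      ∀ l, Degen l → e l = 0
  let e0 : List Q → ZMod p := fun l => if l.length = 1 then if headIdx ρ l = 0 then 1 else 0 else 0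
  have hN0 : ∀ q, Nm e0 [q] = 1 := by
    intro q
    have : ∀ x : ZMod p, (ρ q + x = 0) ↔ x = - ρ q := fun x => by
      rw [add_comm, eq_neg_iff_add_eq_zero]
    simp [Nm_apply, e0, headIdx, hρ, this]
  have hP0 : P 0 e0 := by
    refine ⟨fun l hl => ?_, ?_⟩
    · simp only [Even.zero, if_true]
      rw [← cob_Nm]
      match l, hl with
      | [a, b], _ => simp [cob_cons, hN0]
    · rintro _ ⟨a, x, b, rfl⟩
      simp only [e0, List.length_append, List.length_cons]
      rw [if_neg (by omega)]
  have step : ∀ k e, P k e → ∃ e', P (k + 1) e' ∧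
      ∀ l, l.length = k + 2 → cob e l = Dif p k e' l := by
    intro k e ⟨h1, h2⟩
    by_cases hk : Even k
    · have hk' : ¬ Even (k + 1) := by simpa [Nat.even_add_one] using hk
      simp only [hk, if_true] at h1
      let e' : List Q → ZMod p := fun l' =>
        ∑ j ∈ Finset.range (headIdx ρ l').val,
          cob e (l'.map (((j : ZMod p) - headIdx ρ l') +ᵥ ·))
      have he : ∀ l, l.length = k + 2 → cob e l = Dif p k e' l := by
        intro l hl
        rw [Dif_even hk]
        exact (solve_sub hρ (cob e) l (by rintro rfl; simp at hl) (h1 l hl)).symm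
      refine ⟨e', ⟨fun l hl => ?_, fun l hl => ?_⟩, he⟩
      · simp only [hk', if_false]
        have h3 : T (1 : ZMod p) (cob e') - cob e' = cob (Dif p k e') := by
          rw [Dif_even hk, map_sub, cob_T]
        have h4 : ∀ l : List Q, l.length = k + 3 → T (1 : ZMod p) (cob e') l = cob e' l := by
          intro l hl
          have h5 : cob (Dif p k e') l = 0 := by
            rw [← cob_congr he l hl, cob_cob]; rfl
          rw [← h3, Pi.sub_apply] at h5
          exact sub_eq_zero.1 h5
        have h6 : ∀ j : ℕ, T (j : ZMod p) (cob e') l = cob e' l := by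
          intro j
          induction j with
          | zero => simp [T_zero]
          | succ j ih =>
            rw [← ih, Nat.cast_succ, ← T_T, T_apply, T_apply (j : ZMod p)]
            exact h4 _ (by simpa using hl)
        intro x
        simpa using h6 x.val
      · exact Finset.sum_eq_zero fun j _ => cob_degen h2 _ (hl.map _)
    · have hk' : Even (k + 1) := by simpa [Nat.even_add_one] using hk
      simp only [hk, if_false] at h1
      let e' : List Q → ZMod p := fun l' => if headIdx ρ l' = 0 then cob e l' else 0
      have he : ∀ l, l.length = k + 2 → cob e l = Dif p k e' l := by
        intro l hl
        rw [Dif_odd hk]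
        exact (solve_Nm hρ (cob e) l (by rintro rfl; simp at hl) (h1 l hl)).symm
      refine ⟨e', ⟨fun l hl => ?_, fun l hl => ?_⟩, he⟩
      · simp only [hk', if_true]
        rw [← cob_Nm, ← Dif_odd hk, ← cob_congr he l hl, cob_cob]; rfl
      · simp only [e', cob_degen h2 l hl, ite_self]
  choose! nxt hnxt using step
  let e : ℕ → List Q → ZMod p := fun k => Nat.rec e0 (fun k ek => nxt k ek) k
  have hP : ∀ k, P k (e k) := by
    intro k
    induction k with
    | zero => exact hP0
    | succ k ih => exact (hnxt k _ ih).1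
  exact ⟨e, hN0, fun k l hl => (hnxt k _ (hP k)).2 l hl, fun k l hl => (hP k).2 l hl⟩

end Equivariant

/-! ### Words, the sweeping contraction, and a Dold-type theorem -/

section Words

variable {p : ℕ} [Fact p.Prime] {m : ℕ}

/-- A word assigns to each of `m + 1` consecutive cells of a line either a part, labelled by
`ZMod p`, or nothing. -/
abbrev Word (p m : ℕ) := Fin (m + 1) → Option (ZMod p)

/-- `ZMod p` acts on words by relabelling the parts. -/
instance : AddAction (ZMod p) (Option (ZMod p)) where
  zero_vadd a := by cases a <;> simp
  add_vadd x y a := by cases a <;> simp [add_assoc]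

/-- `Y` arises from `X` by assigning some of the unassigned cells. -/
def Refines (X Y : Word p m) : Prop := ∀ k, X k = none ∨ X k = Y k

/-- The cost of two neighbouring cells: an unassigned left cell counts as one cut, and so does a
change of label between two assigned cells. -/
def cost (a b : Option (ZMod p)) : ℕ :=
  if a = none then 1 else if b = none then 0 else if a = b then 0 else 1

/-- The number of cuts of a word. -/
def cuts (X : Word p m) : ℕ := ∑ k : Fin m, cost (X k.castSucc) (X k.succ)

/-- Overwrite the first `j` cells by the label `0`. -/
def sweep (j : ℕ) (X : Word p m) : Word p m := fun k => if k.val < j then some 0 else X k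

/-- Overwrite the first `j` cells by the label `0` and erase the next one. This word is refined by
both `sweep j X` and `sweep (j + 1) X`. -/
def gap (j : ℕ) (X : Word p m) : Word p m :=
  fun k => if k.val < j then some 0 else if k.val = j then none else X k

/-- The word with all cells labelled `0`. -/
def base : Word p m := fun _ => some 0

lemma cost_le_one (a b : Option (ZMod p)) : cost a b ≤ 1 := by
  unfold cost; split_ifs <;> omega

lemma cost_vadd (x : ZMod p) (a b : Option (ZMod p)) : cost (x +ᵥ a) (x +ᵥ b) = cost a b := by
  cases a <;> cases b <;> simp [cost]

lemma cuts_vadd (x : ZMod p) (X : Word p m) : cuts (x +ᵥ X) = cuts X :=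
  Finset.sum_congr rfl fun _ _ => cost_vadd _ _ _

lemma cuts_base : cuts (base : Word p m) = 0 := by
  simp [cuts, base, cost]

lemma cuts_le_succ {X Y : Word p m} (i : ℕ)
    (h : ∀ k : Fin m, k.val ≠ i → cost (Y k.castSucc) (Y k.succ) ≤ cost (X k.castSucc) (X k.succ)) :
    cuts Y ≤ cuts X + 1 := by
  have h1 : ∀ k : Fin m, cost (Y k.castSucc) (Y k.succ) ≤
      cost (X k.castSucc) (X k.succ) + if k.val = i then 1 else 0 := by
    intro k
    by_cases hk : k.val = i
    · simp only [hk, if_true]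
      have := cost_le_one (Y k.castSucc) (Y k.succ)
      omega
    · simpa [hk] using h k hk
  have h2 : ∑ k : Fin m, (if k.val = i then 1 else 0) ≤ 1 := by
    rw [Finset.sum_boole, Nat.cast_id, Finset.card_le_one]
    intro a ha b hb
    simp only [Finset.mem_filter] at ha hb
    exact Fin.ext (ha.2.trans hb.2.symm)
  calc cuts Y ≤ ∑ k : Fin m, (cost (X k.castSucc) (X k.succ) + if k.val = i then 1 else 0) :=
        Finset.sum_le_sum fun k _ => h1 k
    _ ≤ cuts X + 1 := by rw [Finset.sum_add_distrib]; exact Nat.add_le_add_left h2 _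

lemma cuts_sweep (j : ℕ) (X : Word p m) : cuts (sweep j X) ≤ cuts X + 1 := by
  refine cuts_le_succ (j - 1) fun k hk => ?_
  simp only [sweep, Fin.val_castSucc, Fin.val_succ]
  by_cases h1 : k.val + 1 < j
  · have h2 : k.val < j := by omega
    simp [h1, h2, cost]
  · have h2 : ¬ k.val < j := by omega
    simp [h1, h2]

lemma cuts_gap (j : ℕ) (X : Word p m) : cuts (gap j X) ≤ cuts X + 1 := by
  refine cuts_le_succ j fun k hk => ?_
  simp only [gap, Fin.val_castSucc, Fin.val_succ]
  by_cases h1 : k.val < j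
  · by_cases h2 : k.val + 1 < j
    · simp [h1, h2, cost]
    · have h3 : k.val + 1 = j := by omega
      simp [h3, h1, cost]
  · have h2 : ¬ k.val + 1 < j := by omega
    have h3 : ¬ k.val + 1 = j := by omega
    simp [h1, h2, h3, hk]

lemma Refines.trans {X Y Z : Word p m} (h : Refines X Y) (h' : Refines Y Z) : Refines X Z := fun k => by
  rcases h k with h1 | h1
  · exact Or.inl h1
  · rw [h1]; exact h' k

lemma Refines.vadd {X Y : Word p m} (h : Refines X Y) (x : ZMod p) : Refines (x +ᵥ X) (x +ᵥ Y) := fun k => by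
  rcases h k with h1 | h1
  · left; simp [h1]
  · right; simp [h1]

lemma Refines.sweep {X Y : Word p m} (h : Refines X Y) (j : ℕ) : Refines (sweep j X) (sweep j Y) := fun k => by
  simp only [ICD.sweep]; split_ifs
  · simp
  · exact h k

lemma Refines.gap {X Y : Word p m} (h : Refines X Y) (j : ℕ) : Refines (gap j X) (gap j Y) := fun k => by
  simp only [ICD.gap]; split_ifs
  · simp
  · simp
  · exact h k

lemma gap_sub_sweep (j : ℕ) (X : Word p m) : Refines (gap j X) (sweep j X) := fun k => by
  simp only [gap, sweep]; split_ifs <;> simp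

lemma gap_sub_sweep_succ (j : ℕ) (X : Word p m) : Refines (gap j X) (sweep (j + 1) X) := fun k => by
  simp only [gap, sweep]; split_ifs <;> first | omega | simp

/-- A `k`-simplex in the `k`-skeleton of the space of words: a chain of `k + 1` words, increasing
for `Refines`, with at most `k` cuts each. -/
def Good (k : ℕ) (l : List (Word p m)) : Prop :=
  l.length = k + 1 ∧ l.Pairwise Refines ∧ ∀ X ∈ l, cuts X ≤ k

lemma Good.vadd {k : ℕ} {l : List (Word p m)} (h : Good k l) (x : ZMod p) :
    Good k (l.map (x +ᵥ ·)) := by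
  refine ⟨by simpa using h.1, ?_, ?_⟩
  · rw [List.pairwise_map]
    exact h.2.1.imp fun hab => hab.vadd x
  · intro X hX
    obtain ⟨Y, hY, rfl⟩ := List.mem_map.1 hX
    rw [cuts_vadd]; exact h.2.2 Y hY

/-- The lists at which the prism operator evaluates a cochain. -/
def prismLists {W : Type*} (f g : W → W) : List W → List (List W)
  | [] => []
  | x :: l => (f x :: g x :: l.map g) :: (prismLists f g l).map (List.cons (f x))

lemma prism_eq_zero {W F : Type*} [CommRing F] (f g : W → W) (e : List W → F) (l : List W)
    (h : ∀ l' ∈ prismLists f g l, e l' = 0) : prism f g e l = 0 := by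
  induction l generalizing e with
  | nil => rfl
  | cons x l ih =>
    rw [prism_cons, h _ (by simp [prismLists]), ih, sub_zero]
    intro l' hl'
    exact h _ (by simp [prismLists, hl'])

lemma mem_prismLists {W : Type*} {r : W → W → Prop} {f g : W → W} (hf : ∀ x y, r x y → r (f x) (f y))
    (hg : ∀ x y, r x y → r (g x) (g y)) (hfg : ∀ x, r (f x) (g x))
    (htr : ∀ x y z, r x y → r y z → r x z) {l l' : List W} (hl : l.Pairwise r)
    (h : l' ∈ prismLists f g l) :
    l'.length = l.length + 1 ∧ l'.Pairwise r ∧ ∀ y ∈ l', ∃ x ∈ l, y = f x ∨ y = g x := by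
  induction l generalizing l' with
  | nil => simp [prismLists] at h
  | cons x l ih =>
    rw [List.pairwise_cons] at hl
    simp only [prismLists, List.mem_cons, List.mem_map] at h
    rcases h with rfl | ⟨a, ha, rfl⟩
    · refine ⟨by simp, ?_, ?_⟩
      · rw [List.pairwise_cons, List.pairwise_cons, List.pairwise_map]
        refine ⟨?_, ?_, hl.2.imp fun h => hg _ _ h⟩
        · intro y hy
          rcases List.mem_cons.1 hy with rfl | hy
          · exact hfg x
          · obtain ⟨z, hz, rfl⟩ := List.mem_map.1 hy
            exact htr _ _ _ (hf _ _ (hl.1 z hz)) (hfg z)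
        · intro y hy
          obtain ⟨z, hz, rfl⟩ := List.mem_map.1 hy
          exact hg _ _ (hl.1 z hz)
      · intro y hy
        simp only [List.mem_cons, List.mem_map] at hy
        rcases hy with rfl | rfl | ⟨z, hz, rfl⟩
        · exact ⟨x, by simp, Or.inl rfl⟩
        · exact ⟨x, by simp, Or.inr rfl⟩
        · exact ⟨z, by simp [hz], Or.inr rfl⟩
    · obtain ⟨h1, h2, h3⟩ := ih hl.2 ha
      refine ⟨by simp [h1], ?_, ?_⟩
      · rw [List.pairwise_cons]
        refine ⟨fun y hy => ?_, h2⟩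
        obtain ⟨z, hz, rfl | rfl⟩ := h3 y hy
        · exact hf _ _ (hl.1 z hz)
        · exact htr _ _ _ (hf _ _ (hl.1 z hz)) (hfg z)
      · intro y hy
        rcases List.mem_cons.1 hy with rfl | hy
        · exact ⟨x, by simp, Or.inl rfl⟩
        · obtain ⟨z, hz, h⟩ := h3 y hy
          exact ⟨z, by simp [hz], h⟩

/-- The contraction of the space of words onto `base`: sweep the label `0` across the line. The
step from `sweep j` to `sweep (j + 1)` passes through `gap j`. -/
def contr : (List (Word p m) → ZMod p) →ₗ[ZMod p] (List (Word p m) → ZMod p) :=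
  ∑ j ∈ Finset.range (m + 1), (prism (gap j) (sweep j) - prism (gap j) (sweep (j + 1)))

lemma contr_eq (e : List (Word p m) → ZMod p) : contr e = ∑ j ∈ Finset.range (m + 1),
    (prism (gap j) (sweep j) e - prism (gap j) (sweep (j + 1)) e) := by
  simp [contr]

lemma cob_contr (e : List (Word p m) → ZMod p) :
    cob (contr e) + contr (cob e) = e - pull (fun _ => base) e := by
  have h0 : sweep 0 = (id : Word p m → Word p m) := by
    funext X k; simp [sweep]
  have h1 : sweep (m + 1) = (fun _ => base : Word p m → Word p m) := by
    funext X k; simp only [sweep, base, k.isLt, if_true]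
  have h2 : e - pull (fun _ => base) e = pull (sweep 0) e - pull (sweep (m + 1)) e := by
    rw [h0, h1]; congr 1; funext l; simp
  rw [contr_eq, contr_eq, map_sum, ← Finset.sum_add_distrib, h2,
    ← Finset.sum_range_sub' (fun j => pull (sweep j) e)]
  refine Finset.sum_congr rfl fun j _ => ?_
  have a := cob_prism (gap j) (sweep j) e
  have b := cob_prism (gap j) (sweep (j + 1)) e
  rw [map_sub]
  linear_combination (exp := 1) a - b

/-- Sweeping creates at most one new cut, so the contraction maps the `k`-skeleton to the
`(k + 1)`-skeleton. -/
lemma contr_supp {k : ℕ} {e : List (Word p m) → ZMod p} (he : ∀ l, Good (k + 1) l → e l = 0)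
    (l : List (Word p m)) (hl : Good k l) : contr e l = 0 := by
  have key : ∀ f g : Word p m → Word p m, (∀ x y, Refines x y → Refines (f x) (f y)) →
      (∀ x y, Refines x y → Refines (g x) (g y)) → (∀ x, Refines (f x) (g x)) →
      (∀ x, cuts (f x) ≤ cuts x + 1) → (∀ x, cuts (g x) ≤ cuts x + 1) →
      prism f g e l = 0 := by
    intro f g hf hg hfg cf cg
    refine prism_eq_zero _ _ _ _ fun l' hl' => he l' ?_
    obtain ⟨h1, h2, h3⟩ := mem_prismLists hf hg hfg (fun _ _ _ h h' => h.trans h') hl.2.1 hl'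
    refine ⟨by rw [h1, hl.1], h2, fun X hX => ?_⟩
    obtain ⟨z, hz, rfl | rfl⟩ := h3 X hX
    · exact (cf z).trans (Nat.add_le_add_right (hl.2.2 z hz) 1)
    · exact (cg z).trans (Nat.add_le_add_right (hl.2.2 z hz) 1)
  rw [contr_eq, Finset.sum_apply]
  refine Finset.sum_eq_zero fun j _ => ?_
  rw [Pi.sub_apply, key _ _ (fun _ _ h => h.gap j) (fun _ _ h => h.sweep j) (gap_sub_sweep j)
    (cuts_gap j) (cuts_sweep j), key _ _ (fun _ _ h => h.gap j) (fun _ _ h => h.sweep (j + 1))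
    (gap_sub_sweep_succ j) (cuts_gap j) (cuts_sweep (j + 1)), sub_zero]

/-- The fundamental chains of the successive skeleta, regarded as functionals on cochains: start
with the vertex `base`, and alternately contract and apply the differentials `Dif`. -/
def sig : ℕ → (List (Word p m) → ZMod p) →ₗ[ZMod p] ZMod p
  | 0 => LinearMap.proj [base]
  | k + 1 => (sig k).comp ((Dif p k).comp contr)

lemma sig_succ (k : ℕ) (e : List (Word p m) → ZMod p) :
    sig (k + 1) e = sig k (Dif p k (contr e)) := rfl

lemma Dif_supp {k i : ℕ} {e : List (Word p m) → ZMod p} (he : ∀ l, Good k l → e l = 0)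
    (l : List (Word p m)) (hl : Good k l) : Dif p i e l = 0 := by
  by_cases hi : Even i
  · rw [Dif_even hi, Pi.sub_apply, T_apply, he _ (hl.vadd _), he _ hl, sub_zero]
  · rw [Dif_odd hi, Nm_apply]
    exact Finset.sum_eq_zero fun x _ => he _ (hl.vadd x)

/-- The chain `sig k` is supported in the `k`-skeleton. -/
lemma sig_supp (k : ℕ) (e : List (Word p m) → ZMod p) (he : ∀ l, Good k l → e l = 0) :
    sig k e = 0 := by
  induction k generalizing e with
  | zero => exact he _ ⟨rfl, by simp, by simp [cuts_base]⟩
  | succ k ih =>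
    rw [sig_succ]
    exact ih _ fun l hl => Dif_supp (fun l' hl' => contr_supp he l' hl') l hl

lemma sig_congr (k : ℕ) (e e' : List (Word p m) → ZMod p) (he : ∀ l, Good k l → e l = e' l) :
    sig k e = sig k e' := by
  rw [← sub_eq_zero, ← map_sub]
  exact sig_supp k _ fun l hl => by rw [Pi.sub_apply, he l hl, sub_self]

/-- The boundary of `sig (k + 1)` is the `k`-th differential applied to `sig k`. -/
lemma sig_cob (k : ℕ) (e : List (Word p m) → ZMod p) :
    sig (k + 1) (cob e) = sig k (Dif p k e) := by
  have h1 : contr (cob e) = e - pull (fun _ => base) e - cob (contr e) := by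
    rw [← cob_contr]; abel
  have h2 : Dif p k (pull (fun _ : Word p m => base) e) = 0 := by
    refine Dif_of_invariant k _ fun x => ?_
    funext l
    simp [T_apply, Function.comp_def]
  have h3 : sig k (Dif p k (cob (contr e))) = 0 := by
    rw [← cob_Dif]
    cases k with
    | zero =>
      change cob (Dif p 0 (contr e)) [(base : Word p m)] = 0
      rw [cob_cons, cob_nil, sub_zero, Dif_even (by simp)]
      simp only [Pi.sub_apply, T_apply, List.map_nil, sub_self]
    | succ k => rw [sig_cob k, Dif_Dif, map_zero]
  rw [sig_succ, h1, map_sub, map_sub, map_sub, map_sub, h2, h3, map_zero, sub_zero, sub_zero]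

variable {Q : Type*} [AddAction (ZMod p) Q]

/-- A Dold-type theorem: an equivariant map `Λ` from the words with at most `N` cuts to a free
`ZMod p`-set sends some `N`-simplex of the `N`-skeleton to a list without equal neighbours.
Pairing the chains `sig k` with the pullbacks of the cochains of `exists_cochains` gives the value
one in every degree, whereas degenerate images would make the pairing in degree `N` vanish. -/
theorem exists_nondegen (ρ : Q → ZMod p) (hρ : ∀ (x : ZMod p) q, ρ (x +ᵥ q) = ρ q + x) (N : ℕ)
    (Λ : Word p m → Q) (hΛ : ∀ (x : ZMod p) X, cuts X ≤ N → Λ (x +ᵥ X) = x +ᵥ Λ X) :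
    ∃ l, Good N l ∧ ¬ Degen (l.map Λ) := by
  by_contra! hcon
  obtain ⟨e, h0, h1, h2⟩ := exists_cochains ρ hρ
  let e' : ℕ → List (Word p m) → ZMod p := fun k => pull Λ (e k)
  have hmap : ∀ k ≤ N, ∀ l : List (Word p m), Good k l → ∀ x : ZMod p,
      (l.map (x +ᵥ ·)).map Λ = (l.map Λ).map (x +ᵥ ·) := by
    intro k hk l hl x
    rw [List.map_map, List.map_map]
    exact List.map_congr_left fun X hX => hΛ x X ((hl.2.2 X hX).trans hk)
  have hT : ∀ k ≤ N, ∀ l : List (Word p m), Good k l → ∀ (x : ZMod p) (f : List Q → ZMod p),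
      T x (pull Λ f) l = T x f (l.map Λ) := by
    intro k hk l hl x f
    rw [T_apply, pull_apply, hmap k hk l hl, T_apply]
  have hN : ∀ k ≤ N, ∀ l : List (Word p m), Good k l → ∀ (f : List Q → ZMod p),
      Nm (pull Λ f) l = Nm f (l.map Λ) := by
    intro k hk l hl f
    simp only [Nm_eq, Finset.sum_apply, hT k hk l hl]
  have hD : ∀ k < N, ∀ l : List (Word p m), Good (k + 1) l →
      cob (e' k) l = Dif p k (e' (k + 1)) l := by
    intro k hk l hl
    rw [cob_pull, pull_apply, h1 k _ (by simpa using hl.1)]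
    by_cases hk' : Even k
    · rw [Dif_even hk', Dif_even hk', Pi.sub_apply, Pi.sub_apply, hT (k + 1) hk l hl]; rfl
    · rw [Dif_odd hk', Dif_odd hk', hN (k + 1) hk l hl]
  have ha : ∀ k ≤ N, sig k (Nm (e' k)) = 1 := by
    intro k
    induction k with
    | zero =>
      intro hk
      change Nm (e' 0) [base] = 1
      rw [hN 0 hk _ ⟨rfl, by simp, by simp [cuts_base]⟩]
      exact h0 _
    | succ k ih =>
      intro hk
      rw [← ih (by omega)]
      by_cases hk' : Even k
      · have hu : ∀ j : ℕ, sig (k + 1) (T (j : ZMod p) (e' (k + 1))) - sig k (T (j : ZMod p) (e' k)) =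
            sig (k + 1) (e' (k + 1)) - sig k (e' k) := by
          intro j
          induction j with
          | zero => simp [T_zero]
          | succ j ihj =>
            rw [← ihj]
            have h3 : sig (k + 1) (T (j : ZMod p) (Dif p k (e' (k + 1)))) =
                sig k (T (j : ZMod p) (Dif p k (e' k))) := by
              rw [T_Dif k _ (e' k), ← sig_cob, cob_T]
              refine sig_congr _ _ _ fun l hl => ?_
              rw [T_apply, T_apply, hD k hk _ (hl.vadd _)]
            rw [Dif_even hk', Dif_even hk'] at h3
            simp only [map_sub, T_T] at h3
            rw [Nat.cast_succ]
            linear_combination h3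
        rw [← sub_eq_zero, Nm_eq, Nm_eq, map_sum, map_sum, ← Finset.sum_sub_distrib]
        have : ∀ x : ZMod p, sig (k + 1) (T x (e' (k + 1))) - sig k (T x (e' k)) =
            sig (k + 1) (e' (k + 1)) - sig k (e' k) := fun x => by
          simpa using hu x.val
        simp [this]
      · rw [← Dif_odd hk' (e' k), ← sig_cob, ← Dif_odd hk']
        exact sig_congr _ _ _ fun l hl => (hD k hk l hl).symm
  have hz : sig N (Nm (e' N)) = 0 := by
    refine sig_supp _ _ fun l hl => ?_
    rw [Nm_apply]
    exact Finset.sum_eq_zero fun x _ => h2 _ _ (hcon _ (hl.vadd x))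
  exact one_ne_zero ((ha N le_rfl).symm.trans hz)

end Words

/-! ### Equal splitting of weighted words -/

section Discrete

variable {p : ℕ} [Fact p.Prime] {m n : ℕ}

/-- Families, one for each measure, of proper subsets of `ZMod p`, not all empty. These index the
faces of a join of `n` boundaries of `(p - 1)`-simplices. -/
def Face (p n : ℕ) : Type :=
  {s : Fin n → Finset (ZMod p) // (∃ i, (s i).Nonempty) ∧ ∀ i, ∃ g, g ∉ s i}

/-- `ZMod p` acts on faces by translating every subset. -/
instance : AddAction (ZMod p) (Face p n) where
  vadd x s := ⟨fun i => (s.1 i).map (Equiv.addLeft x).toEmbedding, by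
    obtain ⟨s, ⟨i, hi⟩, h⟩ := s
    refine ⟨⟨i, by simpa using hi⟩, fun i => ?_⟩
    obtain ⟨g, hg⟩ := h i
    exact ⟨x + g, by simpa using hg⟩⟩
  zero_vadd s := by
    apply Subtype.ext; funext i; ext g
    change g ∈ (s.1 i).map _ ↔ _
    rw [Finset.mem_map_equiv, Equiv.addLeft_symm_apply, neg_zero]
    simp only [zero_add]
  add_vadd x y s := by
    apply Subtype.ext; funext i; ext g
    change g ∈ (s.1 i).map _ ↔ g ∈ ((s.1 i).map _).map _
    rw [Finset.mem_map_equiv, Finset.mem_map_equiv, Finset.mem_map_equiv,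
      Equiv.addLeft_symm_apply, Equiv.addLeft_symm_apply, Equiv.addLeft_symm_apply,
      neg_add_rev]
    simp only [add_assoc]

lemma Face.vadd_val (x : ZMod p) (s : Face p n) (i : Fin n) :
    (x +ᵥ s).1 i = (s.1 i).map (Equiv.addLeft x).toEmbedding := rfl

/-- The average of the elements of a finite set, computed in `ZMod p`. It is equivariant on
nonempty proper subsets, whose cardinality is invertible. -/
def bary (s : Finset (ZMod p)) : ZMod p := (∑ g ∈ s, g) / (s.card : ZMod p)

lemma bary_map (x : ZMod p) (s : Finset (ZMod p)) (hs : s.Nonempty) (hs' : ∃ g, g ∉ s) :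
    bary (s.map (Equiv.addLeft x).toEmbedding) = bary s + x := by
  have hlt : s.card < p := by
    obtain ⟨g, hg⟩ := hs'
    have := Finset.card_lt_univ_of_notMem hg
    rwa [ZMod.card] at this
  have hne : (s.card : ZMod p) ≠ 0 := by
    rw [Ne, ZMod.natCast_eq_zero_iff]
    exact Nat.not_dvd_of_pos_of_lt hs.card_pos hlt
  have hsum : ∑ g ∈ s, (x + g) = s.card * x + ∑ g ∈ s, g := by
    rw [Finset.sum_add_distrib, Finset.sum_const, nsmul_eq_mul]
  simp only [bary, Finset.sum_map, Finset.card_map, Equiv.coe_toEmbedding, Equiv.coe_addLeft]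
  rw [hsum]
  field_simp
  ring

/-- The measures whose subset is nonempty. -/
def Face.supp (s : Face p n) : Set (Fin n) := {i | (s.1 i).Nonempty}

lemma Face.supp_nonempty (s : Face p n) : s.supp.Nonempty := s.2.1

/-- An equivariant label of a face, witnessing that the action is free. The chosen index depends
only on `Face.supp`, which is translation invariant. -/
noncomputable def Face.idx (s : Face p n) : ZMod p := bary (s.1 s.supp_nonempty.some)

lemma Face.idx_vadd (x : ZMod p) (s : Face p n) : (x +ᵥ s).idx = s.idx + x := by
  have hsupp : (x +ᵥ s).supp = s.supp := by
    ext i; simp [Face.supp, Face.vadd_val]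
  have hpick : (x +ᵥ s).supp_nonempty.some = s.supp_nonempty.some := by
    have : ∀ (A B : Set (Fin n)) (hA : A.Nonempty) (hB : B.Nonempty), A = B → hA.some = hB.some := by
      rintro A _ hA hB rfl; rfl
    exact this _ _ _ _ hsupp
  rw [Face.idx, hpick, Face.vadd_val, bary_map x _ s.supp_nonempty.some_mem (s.2.2 _), Face.idx]

/-- The total number of elements of the subsets, that is, the dimension of the face plus one. -/
def Face.size (s : Face p n) : ℕ := ∑ i, (s.1 i).card

lemma Face.size_pos (s : Face p n) : 1 ≤ s.size := by
  obtain ⟨i, hi⟩ := s.2.1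
  exact hi.card_pos.trans_le
    (Finset.single_le_sum (f := fun i => (s.1 i).card) (fun _ _ => Nat.zero_le _)
      (Finset.mem_univ i))

lemma Face.size_le (s : Face p n) : s.size ≤ (p - 1) * n := by
  have : ∀ i, (s.1 i).card ≤ p - 1 := by
    intro i
    obtain ⟨g, hg⟩ := s.2.2 i
    have := Finset.card_lt_univ_of_notMem hg
    rw [ZMod.card] at this
    omega
  calc s.size ≤ ∑ _i : Fin n, (p - 1) := Finset.sum_le_sum fun i _ => this i
    _ = (p - 1) * n := by simp [mul_comm]

/-- A chain without equal neighbours, graded by `f` with values in `[1, N]`, has at most `N`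
entries. -/
lemma length_le_of_not_degen {Q : Type*} (r : Q → Q → Prop) (f : Q → ℕ) (N : ℕ)
    (hr : ∀ a b, r a b → a = b ∨ f a < f b) (L : List Q) (hL : L.Pairwise r) (hd : ¬ Degen L)
    (hf : ∀ a ∈ L, 1 ≤ f a ∧ f a ≤ N) : L.length ≤ N := by
  have hchain : (L.map f).IsChain (· < ·) := by
    clear hf
    induction L with
    | nil => simp
    | cons a L ih =>
      cases L with
      | nil => simp
      | cons b L =>
        rw [List.map_cons, List.map_cons, List.isChain_cons_cons]
        rw [List.pairwise_cons] at hL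
        refine ⟨?_, ih hL.2 ?_⟩
        · rcases hr a b (hL.1 b (by simp)) with rfl | h
          · exact absurd ⟨[], a, L, rfl⟩ hd
          · exact h
        · rintro ⟨u, x, v, huv⟩
          exact hd ⟨a :: u, x, v, by rw [huv]; rfl⟩
  have hnd : (L.map f).Nodup := (List.isChain_iff_pairwise.1 hchain).imp fun h => h.ne
  have h1 : (L.map f).toFinset ⊆ Finset.Icc 1 N := by
    intro a ha
    simp only [List.mem_toFinset, List.mem_map] at ha
    obtain ⟨b, hb, rfl⟩ := ha
    exact Finset.mem_Icc.2 (hf b hb)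
  have h2 := Finset.card_le_card h1
  rw [List.toFinset_card_of_nodup hnd] at h2
  simpa using h2

/-- The weight of the cells with label `g`. -/
def mass (w : Fin (m + 1) → ℝ) (X : Word p m) (g : ZMod p) : ℝ :=
  ∑ k, if X k = some g then w k else 0

lemma mass_mono {w : Fin (m + 1) → ℝ} (hw : ∀ k, 0 ≤ w k) {X Y : Word p m} (h : Refines X Y)
    (g : ZMod p) : mass w X g ≤ mass w Y g := by
  refine Finset.sum_le_sum fun k _ => ?_
  rcases h k with h1 | h1
  · rw [h1, if_neg (by simp)]
    split_ifs
    · exact hw k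
    · exact le_rfl
  · rw [h1]

lemma mass_vadd (w : Fin (m + 1) → ℝ) (x : ZMod p) (X : Word p m) (g : ZMod p) :
    mass w (x +ᵥ X) g = mass w X (-x + g) := by
  refine Finset.sum_congr rfl fun k _ => ?_
  have : (x +ᵥ X) k = some g ↔ X k = some (-x + g) := by
    rw [Pi.vadd_apply]
    cases X k with
    | none => simp
    | some a => simp [eq_neg_add_iff_add_eq]
  simp only [this]

lemma sum_mass_le {w : Fin (m + 1) → ℝ} (hw : ∀ k, 0 ≤ w k) (X : Word p m) :
    ∑ g, mass w X g ≤ ∑ k, w k := by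
  unfold mass
  rw [Finset.sum_comm]
  refine Finset.sum_le_sum fun k _ => ?_
  cases X k with
  | none => simpa using hw k
  | some a => simp

/-- Discrete equal splitting: some word with at most `(p - 1) * n` cuts gives no part more than the
fraction `1 / p` of any of `n` weights. Otherwise the sets of overweight parts define an equivariant
map from the words with at most `(p - 1) * n` cuts to `Face p n`, monotone for inclusion; but chains
of faces are too short for the conclusion of `exists_nondegen`. -/
theorem discrete_splitting (w : Fin n → Fin (m + 1) → ℝ) (hw : ∀ i k, 0 ≤ w i k) :
    ∃ X : Word p m, cuts X ≤ (p - 1) * n ∧ ∀ i g, p * mass (w i) X g ≤ ∑ k, w i k := by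
  classical
  by_contra! hcon
  have hp : (0 : ℝ) < p := by exact_mod_cast (Fact.out : p.Prime).pos
  set N := (p - 1) * n with hN
  let Λ₀ : Word p m → Fin n → Finset (ZMod p) := fun X i =>
    Finset.univ.filter fun g => ∑ k, w i k < p * mass (w i) X g
  have hval : ∀ X : Word p m, cuts X ≤ N →
      (∃ i, (Λ₀ X i).Nonempty) ∧ ∀ i, ∃ g, g ∉ Λ₀ X i := by
    intro X hX
    refine ⟨?_, fun i => ?_⟩
    · obtain ⟨i, g, h⟩ := hcon X hX
      exact ⟨i, g, by simpa [Λ₀] using h⟩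
    · by_contra! hall
      have h1 : ∀ g : ZMod p, ∑ k, w i k < p * mass (w i) X g := fun g => by
        simpa [Λ₀] using hall g
      have h2 : ∑ _g : ZMod p, ∑ k, w i k < ∑ g : ZMod p, p * mass (w i) X g :=
        Finset.sum_lt_sum_of_nonempty Finset.univ_nonempty fun g _ => h1 g
      rw [Finset.sum_const, Finset.card_univ, ZMod.card, nsmul_eq_mul, ← Finset.mul_sum] at h2
      exact absurd (lt_of_mul_lt_mul_left h2 hp.le) (not_lt.2 (sum_mass_le (hw i) X))
  let q₀ : Face p n := ⟨Λ₀ base, hval base (by simp [cuts_base])⟩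
  let Λ : Word p m → Face p n := fun X => if h : cuts X ≤ N then ⟨Λ₀ X, hval X h⟩ else q₀
  have hΛ : ∀ X, cuts X ≤ N → (Λ X).1 = Λ₀ X := fun X h => by simp [Λ, h]
  obtain ⟨l, hl, hd⟩ := exists_nondegen (Q := Face p n) (m := m) Face.idx Face.idx_vadd N Λ (by
    intro x X hX
    apply Subtype.ext
    rw [hΛ _ (by rwa [cuts_vadd])]
    funext i
    rw [Face.vadd_val, hΛ X hX]
    ext g
    simp only [Λ₀, Finset.mem_filter, Finset.mem_univ, true_and, Finset.mem_map_equiv, mass_vadd]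
    rfl)
  have hlen := length_le_of_not_degen (fun s t : Face p n => ∀ i, s.1 i ⊆ t.1 i) Face.size N (by
    intro s t hst
    by_cases h : ∀ i, s.1 i = t.1 i
    · left; exact Subtype.ext (funext h)
    · right
      push Not at h
      obtain ⟨i, hi⟩ := h
      exact Finset.sum_lt_sum (fun i _ => Finset.card_le_card (hst i))
        ⟨i, Finset.mem_univ i, Finset.card_lt_card ((hst i).ssubset_of_ne hi)⟩)
    (l.map Λ) (by
      rw [List.pairwise_map]
      refine hl.2.1.imp_of_mem fun {X Y} hX hY hXY i => ?_
      rw [hΛ X (hl.2.2 X hX), hΛ Y (hl.2.2 Y hY)]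
      intro g hg
      simp only [Λ₀, Finset.mem_filter, Finset.mem_univ, true_and] at hg ⊢
      exact hg.trans_le (mul_le_mul_of_nonneg_left (mass_mono (hw i) hXY g) hp.le)) hd
    (fun s _ => ⟨s.size_pos, s.size_le⟩)
  rw [List.length_map, hl.1] at hlen
  omega

end Discrete

/-! ### Equal splitting of continuous distribution functions -/

section Continuous

variable {p : ℕ} [Fact p.Prime] {m n : ℕ}

/-- The labels of a word with each unassigned cell inheriting the label of its left neighbour, or
`0` at the start of the line. The index runs over `ℕ` for convenience; past the end of the word the
label stays constant. -/
def fill (X : Word p m) : ℕ → ZMod p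
  | 0 => (X 0).getD 0
  | k + 1 => if h : k + 1 < m + 1 then (X ⟨k + 1, h⟩).getD (fill X k) else fill X k

/-- The number of label changes up to position `k`. -/
def changes {α : Type*} [DecidableEq α] (Y : ℕ → α) : ℕ → ℕ
  | 0 => 0
  | k + 1 => changes Y k + if Y (k + 1) = Y k then 0 else 1

lemma changes_mono {α : Type*} [DecidableEq α] (Y : ℕ → α) : Monotone (changes Y) :=
  monotone_nat_of_le_succ fun k => by simp [changes]

lemma eq_of_changes_eq {α : Type*} [DecidableEq α] (Y : ℕ → α) {k l : ℕ} (hkl : k ≤ l)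
    (h : changes Y k = changes Y l) : Y k = Y l := by
  induction l, hkl using Nat.le_induction with
  | base => rfl
  | succ l hl ih =>
    have h1 := changes_mono Y hl
    simp only [changes] at h
    by_cases hY : Y (l + 1) = Y l
    · rw [hY]
      exact ih (by simpa [hY] using h)
    · simp only [hY, if_false] at h
      omega

lemma fill_of_some (X : Word p m) (k : Fin (m + 1)) (a : ZMod p) (h : X k = some a) :
    fill X k = a := by
  obtain ⟨k, hk⟩ := k
  cases k with
  | zero =>
    have : X 0 = some a := h
    simp [fill, this]
  | succ k => simp [fill, hk, h]

lemma changes_fill_le (X : Word p m) : changes (fill X) m ≤ cuts X := by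
  have key : ∀ j ≤ m, changes (fill X) j ≤
      ∑ k : Fin m, if k.val < j then cost (X k.castSucc) (X k.succ) else 0 := by
    intro j
    induction j with
    | zero => intro; simp [changes]
    | succ j ih =>
      intro hj
      have h1 := ih (by omega)
      have h2 : ∑ k : Fin m, (if k.val < j + 1 then cost (X k.castSucc) (X k.succ) else 0) =
          (∑ k : Fin m, if k.val < j then cost (X k.castSucc) (X k.succ) else 0) +
            cost (X (⟨j, hj⟩ : Fin m).castSucc) (X (⟨j, hj⟩ : Fin m).succ) := by
        rw [← Finset.sum_ite_eq' Finset.univ (⟨j, hj⟩ : Fin m)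
          (fun k => cost (X k.castSucc) (X k.succ)) |>.trans (if_pos (Finset.mem_univ _)),
          ← Finset.sum_add_distrib]
        refine Finset.sum_congr rfl fun k _ => ?_
        by_cases h3 : k.val = j
        · have : k = ⟨j, hj⟩ := Fin.ext h3
          subst this; simp
        · have : k ≠ ⟨j, hj⟩ := fun h => h3 (congrArg Fin.val h)
          have h4 : k.val < j + 1 ↔ k.val < j := by omega
          simp [this, h4]
      rw [h2]
      refine Nat.add_le_add h1 ?_
      split_ifs with h3
      · exact Nat.zero_le _
      · cases ha : X (⟨j, hj⟩ : Fin m).castSucc with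
        | none => simp [cost]
        | some a =>
          have hya : fill X j = a := fill_of_some X _ a ha
          cases hb : X (⟨j, hj⟩ : Fin m).succ with
          | none =>
            exfalso; apply h3
            have hb' : X ⟨j + 1, by omega⟩ = none := hb
            simp [fill, hj, hb']
          | some b =>
            have hyb : fill X (j + 1) = b := fill_of_some X _ b hb
            have : a ≠ b := by rintro rfl; exact h3 (hyb.trans hya.symm)
            simp [cost, this]
  refine (key m le_rfl).trans (le_of_eq ?_)
  exact Finset.sum_congr rfl fun k _ => by simp

lemma card_none_le (X : Word p m) : (Finset.univ.filter fun k => X k = none).card ≤ cuts X + 1 := by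
  rw [Finset.card_filter, Fin.sum_univ_castSucc]
  refine Nat.add_le_add (Finset.sum_le_sum fun k _ => ?_) (by split_ifs <;> simp)
  split_ifs with h
  · simp [cost, h]
  · exact Nat.zero_le _

/-- For monotone `ch` the indices `k < M` with `ch k < j` form an initial segment, so the sum
telescopes. -/
lemma sum_count (ch : ℕ → ℕ) (hch : Monotone ch) (j M : ℕ) (H : ℕ → ℝ) :
    ∑ k ∈ Finset.range M, (if ch k < j then H (k + 1) - H k else 0) =
      H (Nat.count (fun k => ch k < j) M) - H 0 := by
  induction M with
  | zero => simp
  | succ M ih =>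
    rw [Finset.sum_range_succ, ih, Nat.count_succ]
    split_ifs with h
    · have : Nat.count (fun k => ch k < j) M = M :=
        Nat.count_iff_forall.2 fun k hk => (hch hk.le).trans_lt h
      rw [this]; ring
    · simp

/-- A labelling of the cells of the grid `y` with at most `N` changes, rewritten as `N` cut points
and labels of the intervals between them. -/
lemma exists_cut_points (Y : ℕ → ZMod p) (M N : ℕ) (hN : ∀ k < M, changes Y k ≤ N)
    (y : ℕ → ℝ) (hy : Monotone y) :
    ∃ (x : Fin (N + 2) → ℝ) (lab : Fin (N + 1) → ZMod p), Monotone x ∧ x 0 = y 0 ∧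
      x (Fin.last (N + 1)) = y M ∧ ∀ (G : ℝ → ℝ) (g : ZMod p),
        ∑ j, (if lab j = g then G (x j.succ) - G (x j.castSucc) else 0) =
          ∑ k ∈ Finset.range M, if Y k = g then G (y (k + 1)) - G (y k) else 0 := by
  classical
  let ch := changes Y
  let a : ℕ → ℕ := fun j => Nat.count (fun k => ch k < j) M
  let lab : Fin (N + 1) → ZMod p := fun j =>
    if h : ∃ k < M, ch k = j then Y h.choose else 0
  have hlab : ∀ k (hk : k < M), lab ⟨ch k, Nat.lt_succ_of_le (hN k hk)⟩ = Y k := by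
    intro k hk
    have h : ∃ k' < M, ch k' = ch k := ⟨k, hk, rfl⟩
    simp only [lab, h, dif_pos]
    rcases le_total h.choose k with h1 | h1
    · exact eq_of_changes_eq Y h1 h.choose_spec.2
    · exact (eq_of_changes_eq Y h1 h.choose_spec.2.symm).symm
  refine ⟨fun j => y (a j), lab, ?_, ?_, ?_, ?_⟩
  · intro i j hij
    apply hy
    exact Nat.count_mono_left fun k _ hk => lt_of_lt_of_le hk hij
  · simp [a]
  · have : a (N + 1) = M := Nat.count_iff_forall.2 fun k hk => Nat.lt_succ_of_le (hN k hk)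
    simp [this]
  · intro G g
    have h1 : ∀ j : Fin (N + 1), G (y (a j.succ.val)) - G (y (a j.castSucc.val)) =
        ∑ k ∈ Finset.range M, if ch k = j then G (y (k + 1)) - G (y k) else 0 := by
      intro j
      have e1 := sum_count ch (changes_mono Y) (j + 1) M (fun k => G (y k))
      have e2 := sum_count ch (changes_mono Y) j M (fun k => G (y k))
      have : G (y (a j.succ.val)) - G (y (a j.castSucc.val)) =
        ∑ k ∈ Finset.range M, (if ch k < j + 1 then G (y (k + 1)) - G (y k) else 0) -
        ∑ k ∈ Finset.range M, (if ch k < j then G (y (k + 1)) - G (y k) else 0) := by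
        rw [e1, e2]; simp [a]
      rw [this, ← Finset.sum_sub_distrib]
      refine Finset.sum_congr rfl fun k _ => ?_
      rcases lt_trichotomy (ch k) j with h | h | h
      · rw [if_pos (by omega), if_pos h, if_neg (by omega), sub_self]
      · rw [if_pos (by omega), if_neg (by omega), if_pos h, sub_zero]
      · rw [if_neg (by omega), if_neg (by omega), if_neg (by omega), sub_zero]
    simp only [h1]
    calc ∑ j, (if lab j = g then
          ∑ k ∈ Finset.range M, (if ch k = j then G (y (k + 1)) - G (y k) else 0) else 0)
        = ∑ j, ∑ k ∈ Finset.range M,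
          (if lab j = g then (if ch k = j then G (y (k + 1)) - G (y k) else 0) else 0) := by
          refine Finset.sum_congr rfl fun j _ => ?_
          split_ifs <;> simp
      _ = ∑ k ∈ Finset.range M, if Y k = g then G (y (k + 1)) - G (y k) else 0 := by
          rw [Finset.sum_comm]
          refine Finset.sum_congr rfl fun k hk => ?_
          have hk := Finset.mem_range.1 hk
          rw [Finset.sum_eq_single ⟨ch k, Nat.lt_succ_of_le (hN k hk)⟩]
          · rw [hlab k hk, if_pos rfl]
          · intro j _ hj
            rw [if_neg (c := ch k = j) (fun h => hj (Fin.ext h.symm)), ite_self]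
          · simp

lemma exists_fine_grid (F : Fin n → ℝ → ℝ) (hc : ∀ i, Continuous (F i)) {δ : ℝ} (hδ : 0 < δ) :
    ∃ m : ℕ, ∀ i, ∀ k < m + 1, F i (((k + 1 : ℕ) : ℝ) / (m + 1)) - F i ((k : ℝ) / (m + 1)) ≤ δ := by
  have h1 : UniformContinuousOn (fun t i => F i t) (Set.Icc (0 : ℝ) 1) :=
    isCompact_Icc.uniformContinuousOn_of_continuous (continuous_pi hc).continuousOn
  obtain ⟨d, hd, h2⟩ := Metric.uniformContinuousOn_iff.1 h1 δ hδ
  obtain ⟨m, hm⟩ := exists_nat_one_div_lt hd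
  refine ⟨m, fun i k hk => ?_⟩
  have hpos : (0 : ℝ) < m + 1 := by positivity
  have hk' : ((k + 1 : ℕ) : ℝ) ≤ m + 1 := by exact_mod_cast hk
  have hk'' : (k : ℝ) ≤ m + 1 := by push_cast at hk'; linarith
  have h3 := h2 (((k + 1 : ℕ) : ℝ) / (m + 1)) ⟨by positivity, by rw [div_le_one hpos]; exact hk'⟩
    ((k : ℝ) / (m + 1)) ⟨by positivity, by rw [div_le_one hpos]; exact hk''⟩ (by
      rw [Real.dist_eq, ← sub_div]
      push_cast
      rw [add_sub_cancel_left, abs_of_pos (by positivity)]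
      exact hm)
  have h4 := (dist_le_pi_dist _ _ i).trans_lt h3
  rw [Real.dist_eq] at h4
  exact (le_abs_self _).trans h4.le

/-- Equal splitting up to `ε`, by applying `discrete_splitting` to the increments on a fine grid.
The at most `(p - 1) * n + 1` unassigned cells contribute the error. -/
lemma approx_splitting (F : Fin n → ℝ → ℝ) (hc : ∀ i, Continuous (F i)) (hm : ∀ i, Monotone (F i))
    {ε : ℝ} (hε : 0 < ε) :
    ∃ (lab : Fin ((p - 1) * n + 1) → ZMod p) (x : Fin ((p - 1) * n + 2) → ℝ), Monotone x ∧
      x 0 = 0 ∧ x (Fin.last _) = 1 ∧ ∀ i g,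
        p * ∑ j, (if lab j = g then F i (x j.succ) - F i (x j.castSucc) else 0) ≤
          F i 1 - F i 0 + ε := by
  have hp : (0 : ℝ) < p := by exact_mod_cast (Fact.out : p.Prime).pos
  set N := (p - 1) * n with hN
  obtain ⟨m, hgrid⟩ := exists_fine_grid F hc (δ := ε / (p * (N + 1))) (by positivity)
  let y : ℕ → ℝ := fun k => (k : ℝ) / (m + 1)
  have hy : Monotone y := fun a b hab => by
    simp only [y]; gcongr
  have hy0 : y 0 = 0 := by simp [y]
  have hy1 : y (m + 1) = 1 := by simp only [y]; push_cast; exact div_self (by positivity)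
  let w : Fin n → Fin (m + 1) → ℝ := fun i k => F i (y (k + 1)) - F i (y k)
  have hw : ∀ i k, 0 ≤ w i k := fun i k => sub_nonneg.2 (hm i (hy (Nat.le_succ _)))
  have hwδ : ∀ i k, w i k ≤ ε / (p * (N + 1)) := fun i k => hgrid i k k.isLt
  have htot : ∀ i, ∑ k, w i k = F i 1 - F i 0 := fun i => by
    rw [← hy1, ← hy0, ← Finset.sum_range_sub (fun k => F i (y k)), Finset.sum_range]
  obtain ⟨X, hX, hmass⟩ := discrete_splitting (p := p) w hw
  obtain ⟨x, lab, hx, hx0, hx1, hsum⟩ := exists_cut_points (fill X) (m + 1) N (fun k hk =>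
    ((changes_mono _ (Nat.le_of_lt_succ hk)).trans (changes_fill_le X)).trans hX) y hy
  refine ⟨lab, x, hx, hx0.trans hy0, hx1.trans hy1, fun i g => ?_⟩
  rw [hsum (F i) g, Finset.sum_range]
  have h1 : ∑ k : Fin (m + 1), (if fill X k = g then F i (y (k + 1)) - F i (y k) else 0) ≤
      mass (w i) X g + (N + 1) * (ε / (p * (N + 1))) := by
    have h2 : ∀ k : Fin (m + 1), (if fill X k = g then F i (y (k + 1)) - F i (y k) else 0) ≤
        (if X k = some g then w i k else 0) + if X k = none then ε / (p * (N + 1)) else 0 := by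
      intro k
      cases hk : X k with
      | none =>
        simp only [if_true, reduceCtorEq, if_false, zero_add]
        split_ifs
        · exact hwδ i k
        · positivity
      | some a => simp [fill_of_some X k a hk, w]
    refine (Finset.sum_le_sum fun k _ => h2 k).trans ?_
    rw [Finset.sum_add_distrib, ← Finset.sum_filter (fun k => X k = none), Finset.sum_const,
      nsmul_eq_mul]
    refine add_le_add le_rfl (mul_le_mul_of_nonneg_right ?_ (by positivity))
    exact_mod_cast (card_none_le X).trans (Nat.add_le_add_right hX 1)
  have h3 : (p : ℝ) * ((N + 1) * (ε / (p * (N + 1)))) = ε := by field_simp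
  have h4 := mul_le_mul_of_nonneg_left h1 hp.le
  rw [mul_add, h3] at h4
  have h5 := hmass i g
  rw [htot] at h5
  linarith

/-- Equal splitting into `p` parts with `(p - 1) * n` cuts, by compactness. -/
theorem continuous_splitting (F : Fin n → ℝ → ℝ) (hc : ∀ i, Continuous (F i))
    (hm : ∀ i, Monotone (F i)) :
    ∃ (lab : Fin ((p - 1) * n + 1) → ZMod p) (x : Fin ((p - 1) * n + 2) → ℝ), Monotone x ∧
      x 0 = 0 ∧ x (Fin.last _) = 1 ∧ ∀ i g,
        p * ∑ j, (if lab j = g then F i (x j.succ) - F i (x j.castSucc) else 0) =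
          F i 1 - F i 0 := by
  have hp : (0 : ℝ) < p := by exact_mod_cast (Fact.out : p.Prime).pos
  set N := (p - 1) * n with hN
  let S : (Fin (N + 1) → ZMod p) → ℕ → Set (Fin (N + 2) → ℝ) := fun lab k =>
    {x | Monotone x ∧ x 0 = 0 ∧ x (Fin.last _) = 1 ∧ ∀ i g,
        p * ∑ j, (if lab j = g then F i (x j.succ) - F i (x j.castSucc) else 0) ≤
          F i 1 - F i 0 + 1 / ((k : ℝ) + 1)}
  have hanti : ∀ lab k l, k ≤ l → S lab l ⊆ S lab k := by
    rintro lab k l hkl x ⟨h1, h2, h3, h4⟩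
    refine ⟨h1, h2, h3, fun i g => (h4 i g).trans ?_⟩
    have : 1 / ((l : ℝ) + 1) ≤ 1 / ((k : ℝ) + 1) := Nat.one_div_le_one_div hkl
    linarith
  obtain ⟨lab, hlab⟩ : ∃ lab, ∀ k, (S lab k).Nonempty := by
    by_contra! hcon
    choose K hK using hcon
    obtain ⟨lab, x, hx⟩ := approx_splitting (p := p) F hc hm
      (ε := 1 / (((Finset.univ.sup K : ℕ) : ℝ) + 1)) Nat.one_div_pos_of_nat
    have : x ∈ S lab (K lab) := hanti lab _ _ (Finset.le_sup (Finset.mem_univ lab)) hx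
    rw [hK] at this
    exact this
  have hclosed : ∀ k, IsClosed (S lab k) := by
    intro k
    refine IsClosed.inter ?_ (IsClosed.inter ?_ (IsClosed.inter ?_ ?_))
    · exact isClosed_monotone
    · exact isClosed_eq (continuous_apply _) continuous_const
    · exact isClosed_eq (continuous_apply _) continuous_const
    · change IsClosed {x : Fin (N + 2) → ℝ | ∀ i g,
        p * ∑ j, (if lab j = g then F i (x j.succ) - F i (x j.castSucc) else 0) ≤
          F i 1 - F i 0 + 1 / ((k : ℝ) + 1)}
      simp only [Set.ofPred_forall]
      refine isClosed_iInter fun i => isClosed_iInter fun g => isClosed_le ?_ continuous_const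
      refine continuous_const.mul (continuous_finsetSum _ fun j _ => ?_)
      split_ifs
      · exact ((hc i).comp (continuous_apply _)).sub ((hc i).comp (continuous_apply _))
      · exact continuous_const
  have hcomp : IsCompact (S lab 0) := by
    refine (isCompact_univ_pi fun _ : Fin (N + 2) => isCompact_Icc (a := (0 : ℝ)) (b := 1)).of_isClosed_subset
      (hclosed 0) ?_
    rintro x ⟨h1, h2, h3, -⟩ j -
    exact ⟨h2 ▸ h1 (Fin.zero_le j), h3 ▸ h1 (Fin.le_last j)⟩
  obtain ⟨x, hx⟩ := IsCompact.nonempty_iInter_of_sequence_nonempty_isCompact_isClosed (S lab)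
    (fun k => hanti lab _ _ (Nat.le_succ k)) hlab hcomp hclosed
  rw [Set.mem_iInter] at hx
  refine ⟨lab, x, (hx 0).1, (hx 0).2.1, (hx 0).2.2.1, fun i => ?_⟩
  have hle : ∀ g, p * ∑ j, (if lab j = g then F i (x j.succ) - F i (x j.castSucc) else 0) ≤
      F i 1 - F i 0 := by
    intro g
    refine ge_of_tendsto' (x := Filter.atTop)
      (f := fun k : ℕ => F i 1 - F i 0 + 1 / ((k : ℝ) + 1)) ?_ fun k => (hx k).2.2.2 i g
    simpa using tendsto_one_div_add_atTop_nhds_zero_nat.const_add (F i 1 - F i 0)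
  have htot : ∑ g : ZMod p, p * ∑ j, (if lab j = g then F i (x j.succ) - F i (x j.castSucc) else 0) =
      ∑ _g : ZMod p, (F i 1 - F i 0) := by
    rw [← Finset.mul_sum, Finset.sum_comm, Finset.sum_const, Finset.card_univ, ZMod.card,
      nsmul_eq_mul]
    congr 1
    simp only [Finset.sum_ite_eq, Finset.mem_univ, if_true]
    have := Finset.sum_range_sub (fun k => F i (if h : k < N + 2 then x ⟨k, h⟩ else 0)) (N + 1)
    rw [Finset.sum_range] at this
    rw [← (hx 0).2.1, ← (hx 0).2.2.1]
    refine Eq.trans (Finset.sum_congr rfl fun j _ => ?_) (this.trans ?_)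
    · have h1 : j.val + 1 < N + 2 := by omega
      have h2 : j.val < N + 2 := by omega
      simp only [h1, h2, dif_pos]; rfl
    · simp; rfl
  exact fun g => (Finset.sum_eq_sum_iff_of_le fun g _ => hle g).1 htot g (Finset.mem_univ g)

end Continuous

/-! ### The closure properties of the set of good ratios -/

section Ratios

variable {p : ℕ} [Fact p.Prime] {n : ℕ}

/-- The union of the open intervals between consecutive cut points indexed by `J`. -/
def pieces {N : ℕ} (x : Fin (N + 2) → ℝ) (J : Finset (Fin (N + 1))) : Set ℝ :=
  ⋃ j ∈ J, Set.Ioo (x j.castSucc) (x j.succ)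

lemma isOpen_pieces {N : ℕ} (x : Fin (N + 2) → ℝ) (J : Finset (Fin (N + 1))) :
    IsOpen (pieces x J) :=
  isOpen_biUnion fun _ _ => isOpen_Ioo

lemma disjoint_Ioo_of_monotone {N : ℕ} {x : Fin (N + 2) → ℝ} (hx : Monotone x) {i j : Fin (N + 1)}
    (hij : i ≠ j) :
    Disjoint (Set.Ioo (x i.castSucc) (x i.succ)) (Set.Ioo (x j.castSucc) (x j.succ)) := by
  wlog h : i < j generalizing i j
  · exact (this hij.symm (lt_of_le_of_ne (not_lt.1 h) hij.symm)).symm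
  rw [Set.disjoint_left]
  intro z hz hz'
  have : x i.succ ≤ x j.castSucc := hx (by
    rw [Fin.le_def, Fin.val_succ, Fin.val_castSucc]; exact h)
  linarith [hz.2, hz'.1]

lemma frontier_pieces_subset {N : ℕ} (x : Fin (N + 2) → ℝ) (J : Finset (Fin (N + 1))) {z : ℝ}
    (hz : z ∈ frontier (pieces x J)) : ∃ j ∈ J, z = x j.castSucc ∨ z = x j.succ := by
  rw [(isOpen_pieces x J).frontier_eq] at hz
  have h1 : closure (pieces x J) ⊆ ⋃ j ∈ J, Set.Icc (x j.castSucc) (x j.succ) := by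
    refine closure_minimal (Set.iUnion₂_mono fun j _ => Set.Ioo_subset_Icc_self) ?_
    exact Set.Finite.isClosed_biUnion J.finite_toSet fun j _ => isClosed_Icc
  have h2 := h1 hz.1
  simp only [Set.mem_iUnion, exists_prop] at h2
  obtain ⟨j, hj, hz'⟩ := h2
  refine ⟨j, hj, ?_⟩
  by_contra! hcon
  exact hz.2 (Set.mem_biUnion (x := j) hj
    ⟨lt_of_le_of_ne hz'.1 hcon.1.symm, lt_of_le_of_ne hz'.2 hcon.2⟩)

/-- Equal splitting of `n` atomless finite measures into `p` parts with `(p - 1) * n` cuts. -/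
theorem measure_splitting (ν : Fin n → Measure ℝ) [∀ i, IsFiniteMeasure (ν i)]
    [∀ i, NullSingletonClass (ν i)] (hν : ∀ i, ν i (Set.Icc 0 1)ᶜ = 0) :
    ∃ (lab : Fin ((p - 1) * n + 1) → ZMod p) (x : Fin ((p - 1) * n + 2) → ℝ), Monotone x ∧
      x 0 = 0 ∧ x (Fin.last _) = 1 ∧ ∀ i g,
        p * (ν i).real (pieces x (Finset.univ.filter fun j => lab j = g)) =
          (ν i).real Set.univ := by
  have hII : ∀ i a b, IntervalIntegrable (fun _ : ℝ => (1 : ℝ)) (ν i) a b := fun i a b =>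
    intervalIntegrable_const
  have hdiff : ∀ i a b, a ≤ b → (∫ _t in (0 : ℝ)..b, (1 : ℝ) ∂(ν i)) - (∫ _t in (0 : ℝ)..a, (1 : ℝ) ∂(ν i)) =
      (ν i).real (Set.Ioo a b) := by
    intro i a b hab
    rw [intervalIntegral.integral_interval_sub_left (hII i _ _) (hII i _ _),
      intervalIntegral.integral_of_le hab, setIntegral_const, smul_eq_mul, mul_one]
    exact (measureReal_congr Ioo_ae_eq_Ioc).symm
  obtain ⟨lab, x, hx, hx0, hx1, h⟩ := continuous_splitting (p := p)
    (fun i b => ∫ _t in (0 : ℝ)..b, (1 : ℝ) ∂(ν i))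
    (fun i => intervalIntegral.continuous_primitive (hII i) 0)
    (fun i a b hab => sub_nonneg.1 (by rw [hdiff i a b hab]; exact measureReal_nonneg))
  refine ⟨lab, x, hx, hx0, hx1, fun i g => ?_⟩
  have h1 := h i g
  rw [hdiff i 0 1 zero_le_one] at h1
  have h2 : (ν i).real (Set.Ioo 0 1) = (ν i).real Set.univ := by
    rw [measureReal_congr Ioo_ae_eq_Icc]
    refine measureReal_congr ?_
    rw [ae_eq_univ]; exact hν i
  rw [← h2, ← h1, pieces, measureReal_biUnion_finset
    (fun a _ b _ hab => disjoint_Ioo_of_monotone hx hab) (fun _ _ => measurableSet_Ioo),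
    Finset.sum_filter]
  congr 1
  refine Finset.sum_congr rfl fun j _ => ?_
  split_ifs
  · exact (hdiff i _ _ (hx (Fin.castSucc_le_succ j))).symm
  · rfl

/-- The ratio `α` is good if some `c > 0` works for all numbers `n` and all `n`-tuples of atomless
probability measures on `[0,1]`: an open set has measure `α` for each of them, and at most
`(2 - c) * n` boundary points in `(0,1)`. -/
def GoodRatio (α : ℝ) : Prop :=
  ∃ c : ℝ, 0 < c ∧ ∀ (n : ℕ) (μ : Fin n → Measure ℝ), (∀ i, IsProbabilityMeasure (μ i)) →
    (∀ i, NullSingletonClass (μ i)) → (∀ i, μ i (Set.Icc 0 1)ᶜ = 0) →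
    ∃ A : Set ℝ, IsOpen A ∧ ∃ E : Finset ℝ, frontier A ∩ Set.Ioo 0 1 ⊆ E ∧
      (E.card : ℝ) ≤ (2 - c) * n ∧ ∀ i, (μ i).real A = α

lemma goodRatio_one : GoodRatio 1 :=
  ⟨1, one_pos, fun n μ h1 _ _ => ⟨Set.univ, isOpen_univ, ∅, by simp, by simp, fun i => by
    have := h1 i; simp⟩⟩

lemma GoodRatio.compl {α : ℝ} (h : GoodRatio α) : GoodRatio (1 - α) := by
  obtain ⟨c, hc, h⟩ := h
  refine ⟨c, hc, fun n μ h1 h2 h3 => ?_⟩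
  obtain ⟨A, hA, E, hE, hcard, hμ⟩ := h n μ h1 h2 h3
  refine ⟨(closure A)ᶜ, isClosed_closure.isOpen_compl, E, ?_, hcard, fun i => ?_⟩
  · rw [frontier_compl]
    exact (Set.inter_subset_inter_left _ frontier_closure_subset).trans hE
  · have := h1 i
    have := h2 i
    have hnull : μ i (frontier A) = 0 := by
      have hsub : frontier A ⊆ (E ∪ {0, 1} : Set ℝ) ∪ (Set.Icc 0 1)ᶜ := by
        intro z hz
        by_cases hz0 : z ∈ Set.Ioo (0 : ℝ) 1
        · exact Or.inl (Or.inl (hE ⟨hz, hz0⟩))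
        · by_cases hz1 : z ∈ Set.Icc (0 : ℝ) 1
          · left; right
            by_contra hcon
            simp only [Set.mem_insert_iff, Set.mem_singleton_iff, not_or] at hcon
            exact hz0 ⟨lt_of_le_of_ne hz1.1 (Ne.symm hcon.1), lt_of_le_of_ne hz1.2 hcon.2⟩
          · exact Or.inr hz1
      refine measure_mono_null hsub (measure_union_null ?_ (h3 i))
      exact (E.finite_toSet.union (Set.toFinite _)).measure_zero _
    have hcl : (μ i).real (closure A) = (μ i).real A := by
      rw [closure_eq_self_union_frontier]
      exact measureReal_congr (union_ae_eq_left_of_ae_eq_empty (ae_eq_empty.2 hnull))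
    rw [probReal_compl_eq_one_sub isClosed_closure.measurableSet, hcl, hμ i]

/-- Split the restrictions of the measures to a set of ratio `α` into `p` equal parts. Each of the
`(p - 1) * n` cuts is a boundary point of at most two parts, and each old boundary point of at most
one, so the parts have at most `(2 - c) * n + 2 * (p - 1) * n = p * (2 - c / p) * n` boundary points
altogether, and the best part has at most `(2 - c / p) * n`. -/
lemma GoodRatio.div_prime {α : ℝ} (h : GoodRatio α) (p : ℕ) [Fact p.Prime] : GoodRatio (α / p) := by
  classical
  have hp : (0 : ℝ) < p := by exact_mod_cast (Fact.out : p.Prime).pos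
  obtain ⟨c, hc, h⟩ := h
  refine ⟨c / p, by positivity, fun n μ h1 h2 h3 => ?_⟩
  obtain ⟨A, hA, E, hE, hcard, hμ⟩ := h n μ h1 h2 h3
  have hsp := measure_splitting (p := p) (fun i => (μ i).restrict A)
    (fun i => nonpos_iff_eq_zero.1 ((Measure.restrict_apply_le _ _).trans (h3 i).le))
  generalize hN : (p - 1) * n = N at hsp
  obtain ⟨lab, x, hx, hx0, hx1, hsplit⟩ := hsp
  let J : ZMod p → Finset (Fin (N + 1)) := fun g => Finset.univ.filter fun j => lab j = g
  let J₀ : ZMod p → Finset (Fin (N + 1)) := fun g =>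
    (Finset.univ.erase 0).filter fun j => lab j = g
  let J₁ : ZMod p → Finset (Fin (N + 1)) := fun g =>
    (Finset.univ.erase (Fin.last N)).filter fun j => lab j = g
  let U : ZMod p → Finset ℝ := fun g => E.filter (· ∈ pieces x (J g)) ∪
    ((J₀ g).image (fun j => x j.castSucc) ∪ (J₁ g).image (fun j => x j.succ))
  have hU : ∀ g, frontier (A ∩ pieces x (J g)) ∩ Set.Ioo 0 1 ⊆ U g := by
    rintro g z ⟨hz, hz0⟩
    by_cases hfr : z ∈ frontier (pieces x (J g))
    · obtain ⟨j, hj, rfl | rfl⟩ := frontier_pieces_subset x _ hfr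
      · have : j ≠ 0 := by
          rintro rfl
          rw [Fin.castSucc_zero, hx0] at hz0; exact lt_irrefl _ hz0.1
        refine Finset.mem_coe.2 (Finset.mem_union_right _ (Finset.mem_union_left _
          (Finset.mem_image.2 ⟨j, ?_, rfl⟩)))
        simpa [J₀, J, this] using hj
      · have : j ≠ Fin.last N := by
          rintro rfl
          rw [Fin.succ_last, hx1] at hz0; exact lt_irrefl _ hz0.2
        refine Finset.mem_coe.2 (Finset.mem_union_right _ (Finset.mem_union_right _
          (Finset.mem_image.2 ⟨j, ?_, rfl⟩)))
        simpa [J₁, J, this] using hj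
    · rcases frontier_inter_subset _ _ hz with hz1 | hz1
      · have hzP : z ∈ pieces x (J g) := by
          by_contra hcon
          rw [(isOpen_pieces x _).frontier_eq] at hfr
          exact hfr ⟨hz1.2, hcon⟩
        exact Finset.mem_coe.2 (Finset.mem_union_left _
          (Finset.mem_filter.2 ⟨hE ⟨hz1.1, hz0⟩, hzP⟩))
      · exact absurd hz1.2 hfr
  have hsum : ∑ g, (U g).card ≤ E.card + (N + N) := by
    have e1 : ∑ g, (E.filter (· ∈ pieces x (J g))).card ≤ E.card := by
      rw [← Finset.card_biUnion]
      · exact Finset.card_le_card (Finset.biUnion_subset.2 fun g _ => Finset.filter_subset _ _)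
      · intro g _ g' _ hgg
        rw [Function.onFun, Finset.disjoint_left]
        intro z hz hz'
        obtain ⟨j, hj, hzj⟩ := Set.mem_iUnion₂.1 (Finset.mem_filter.1 hz).2
        obtain ⟨j', hj', hzj'⟩ := Set.mem_iUnion₂.1 (Finset.mem_filter.1 hz').2
        have hjj : j ≠ j' := by
          rintro rfl
          simp only [J, Finset.mem_filter] at hj hj'
          exact hgg (hj.2.symm.trans hj'.2)
        exact Set.disjoint_left.1 (disjoint_Ioo_of_monotone hx hjj) hzj hzj'
    have e2 : ∀ s : Finset (Fin (N + 1)), ∑ g, (s.filter fun j => lab j = g).card = s.card :=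
      fun s => (Finset.card_eq_sum_card_fiberwise fun j _ => Finset.mem_coe.2 (Finset.mem_univ (lab j))).symm
    have e3 : ∑ g, (J₀ g).card = N := by
      rw [e2, Finset.card_erase_of_mem (Finset.mem_univ _)]; simp
    have e4 : ∑ g, (J₁ g).card = N := by
      rw [e2, Finset.card_erase_of_mem (Finset.mem_univ _)]; simp
    calc ∑ g, (U g).card ≤ ∑ g, ((E.filter (· ∈ pieces x (J g))).card +
          ((J₀ g).card + (J₁ g).card)) := by
          refine Finset.sum_le_sum fun g _ => (Finset.card_union_le _ _).trans ?_
          refine Nat.add_le_add_left ((Finset.card_union_le _ _).trans ?_) _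
          exact Nat.add_le_add Finset.card_image_le Finset.card_image_le
      _ ≤ E.card + (N + N) := by
          rw [Finset.sum_add_distrib, Finset.sum_add_distrib, e3, e4]
          exact Nat.add_le_add_right e1 _
  obtain ⟨g, -, hg⟩ : ∃ g ∈ (Finset.univ : Finset (ZMod p)), ((U g).card : ℝ) ≤ (2 - c / p) * n := by
    refine Finset.exists_le_of_sum_le Finset.univ_nonempty ?_
    rw [Finset.sum_const, Finset.card_univ, ZMod.card, nsmul_eq_mul]
    have hNr : (N : ℝ) = (p - 1) * n := by
      rw [← hN, Nat.cast_mul, Nat.cast_sub (Fact.out : p.Prime).one_le, Nat.cast_one]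
    have : (∑ g, ((U g).card : ℝ)) ≤ E.card + (N + N) := by exact_mod_cast hsum
    have e5 : (p : ℝ) * ((2 - c / p) * n) = (2 * p - c) * n := by field_simp
    rw [e5]
    rw [hNr] at this
    linarith
  refine ⟨A ∩ pieces x (J g), hA.inter (isOpen_pieces _ _), U g, hU g, hg, fun i => ?_⟩
  have := hsplit i g
  rw [measureReal_restrict_apply (isOpen_pieces _ _).measurableSet, Set.inter_comm,
    measureReal_restrict_apply MeasurableSet.univ, Set.univ_inter, hμ i] at this
  rw [eq_div_iff hp.ne', mul_comm]
  exact this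

lemma GoodRatio.div_nat (q : ℕ) (hq : q ≠ 0) {α : ℝ} (h : GoodRatio α) : GoodRatio (α / q) := by
  induction q using Nat.recOnMul generalizing α with
  | zero => exact absurd rfl hq
  | one => simpa using h
  | prime p hp =>
    have : Fact p.Prime := ⟨hp⟩
    exact h.div_prime p
  | mul a b ha hb =>
    rw [Nat.cast_mul, ← div_div]
    exact hb (right_ne_zero_of_mul hq) (ha (left_ne_zero_of_mul hq) h)

/-- By Euclidean division `b = q * a + r`, the ratio `a / b` is `(1 - r / b) / q`, and `r < a`. -/
lemma goodRatio_div (a b : ℕ) (ha : 0 < a) (hab : a ≤ b) : GoodRatio ((a : ℝ) / b) := by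
  induction a using Nat.strong_induction_on with
  | _ a ih =>
    have hq : 0 < b / a := Nat.div_pos hab ha
    have hbr : (b : ℝ) = a * (b / a : ℕ) + (b % a : ℕ) := by exact_mod_cast (Nat.div_add_mod b a).symm
    have ha' : (0 : ℝ) < a := by exact_mod_cast ha
    have hb' : (0 : ℝ) < b := by exact_mod_cast ha.trans_le hab
    have hq' : (0 : ℝ) < (b / a : ℕ) := by exact_mod_cast hq
    generalize hqq : ((b / a : ℕ) : ℝ) = q at *
    rcases Nat.eq_zero_or_pos (b % a) with hr | hr
    · have h1 := goodRatio_one.div_nat (b / a) hq.ne'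
      rw [hqq] at h1
      rw [hr, Nat.cast_zero, add_zero] at hbr
      convert h1 using 1
      rw [hbr]; field_simp
    · have h1 := ((ih (b % a) (Nat.mod_lt _ ha) hr (Nat.mod_le _ _)).compl).div_nat (b / a) hq.ne'
      rw [hqq] at h1
      convert h1 using 1
      have : ((b % a : ℕ) : ℝ) = b - a * q := by linarith
      rw [this]; field_simp; ring

end Ratios

/-! ### Step measures and achievable sets -/

section Conclusion

lemma IsStepMeasure.nullSingleton {μ : Measure ℝ} (h : IsStepMeasure μ) :
    NullSingletonClass μ := by
  obtain ⟨-, n, a, b, c, -, rfl⟩ := h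
  infer_instance

lemma IsStepMeasure.compl_Icc {μ : Measure ℝ} (h : IsStepMeasure μ) :
    μ (Set.Icc 0 1)ᶜ = 0 := by
  obtain ⟨-, n, a, b, c, hab, rfl⟩ := h
  rw [withDensity_apply _ measurableSet_Icc.compl]
  refine (setLIntegral_congr_fun measurableSet_Icc.compl fun x hx => ?_).trans lintegral_zero
  refine Finset.sum_eq_zero fun i _ => Set.indicator_of_notMem (fun hx' => hx ?_) _
  exact ⟨(hab i).1.trans hx'.1, hx'.2.le.trans (hab i).2⟩

/-- An open set agrees, up to null sets, with the union of those closed intervals between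
consecutive boundary points whose interior it contains. -/
lemma exists_achievable (A : Set ℝ) (hA : IsOpen A) (E : Finset ℝ)
    (hE : frontier A ∩ Set.Ioo 0 1 ⊆ E) :
    ∃ m ≤ E.card, ∃ B, AchievableWithCuts m B ∧ ∀ μ : Measure ℝ, NullSingletonClass μ →
      μ (Set.Icc 0 1)ᶜ = 0 → μ B = μ A := by
  classical
  set E' := E.filter (· ∈ Set.Ioo (0 : ℝ) 1) with hE'
  set S : Finset ℝ := insert 0 (insert 1 E') with hS
  have hcard : S.card = E'.card + 2 := by
    rw [hS, Finset.card_insert_of_notMem (by simp [hE']),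
      Finset.card_insert_of_notMem (by simp [hE'])]
  have hSI : ∀ s ∈ S, 0 ≤ s ∧ s ≤ 1 := by
    intro s hs
    simp only [hS, hE', Finset.mem_insert, Finset.mem_filter] at hs
    rcases hs with rfl | rfl | hs
    · simp
    · simp
    · exact ⟨hs.2.1.le, hs.2.2.le⟩
  let y := S.orderEmbOfFin hcard
  have hymem : ∀ i, y i ∈ S := fun i => S.orderEmbOfFin_mem hcard i
  have hysurj : ∀ s ∈ S, ∃ i, y i = s := fun s hs => by
    have : s ∈ Set.range y := by rw [Finset.range_orderEmbOfFin]; exact hs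
    exact this
  have hy0 : y 0 = 0 := by
    obtain ⟨i, hi⟩ := hysurj 0 (by simp [hS])
    exact le_antisymm (hi ▸ y.monotone (Fin.zero_le i)) (hSI _ (hymem 0)).1
  have hy1 : y (Fin.last _) = 1 := by
    obtain ⟨i, hi⟩ := hysurj 1 (by simp [hS])
    exact le_antisymm (hSI _ (hymem _)).2 (hi ▸ y.monotone (Fin.le_last i))
  have hgap : ∀ (i : Fin (E'.card + 1)), ∀ z ∈ Set.Ioo (y i.castSucc) (y i.succ), z ∉ S := by
    rintro i z ⟨hz1, hz2⟩ hzS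
    obtain ⟨k, rfl⟩ := hysurj z hzS
    have h1 := y.lt_iff_lt.1 hz1
    have h2 := y.lt_iff_lt.1 hz2
    rw [Fin.lt_def, Fin.val_castSucc] at h1
    rw [Fin.lt_def, Fin.val_succ] at h2
    omega
  have hcover : ∀ z ∈ Set.Icc (0 : ℝ) 1, z ∉ S →
      ∃ i : Fin (E'.card + 1), z ∈ Set.Ioo (y i.castSucc) (y i.succ) := by
    intro z hz hzS
    by_contra! hcon
    have hall : ∀ k, y k < z := by
      intro k
      induction k using Fin.induction with
      | zero =>
        rw [hy0]
        refine lt_of_le_of_ne hz.1 ?_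
        rintro rfl
        exact hzS (by simp [hS])
      | succ i ih =>
        refine lt_of_le_of_ne (not_lt.1 fun h => hcon i ⟨ih, h⟩) ?_
        rintro rfl
        exact hzS (hymem _)
    have := hall (Fin.last _)
    rw [hy1] at this
    exact absurd hz.2 (not_le.2 this)
  have hdich : ∀ (i : Fin (E'.card + 1)), ∀ z ∈ Set.Ioo (y i.castSucc) (y i.succ), z ∈ A →
      Set.Ioo (y i.castSucc) (y i.succ) ⊆ A := by
    intro i z hz hzA
    refine isPreconnected_Ioo.subset_left_of_subset_union hA isClosed_closure.isOpen_compl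
      (Set.disjoint_left.2 fun a ha ha' => ha' (subset_closure ha)) ?_ ⟨z, hz, hzA⟩
    intro t ht
    by_contra hcon
    rw [Set.mem_union, not_or, Set.notMem_compl_iff] at hcon
    have hfr : t ∈ frontier A := by
      rw [hA.frontier_eq]; exact ⟨hcon.2, hcon.1⟩
    have ht0 : t ∈ Set.Ioo (0 : ℝ) 1 :=
      ⟨(hSI _ (hymem _)).1.trans_lt ht.1, ht.2.trans_le (hSI _ (hymem _)).2⟩
    refine hgap i t ht ?_
    simp only [hS, hE', Finset.mem_insert, Finset.mem_filter]
    exact Or.inr (Or.inr ⟨hE ⟨hfr, ht0⟩, ht0⟩)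
  refine ⟨E'.card, Finset.card_filter_le _ _, _, ⟨y, y.monotone, hy0, hy1,
    Finset.univ.filter fun i => Set.Ioo (y i.castSucc) (y i.succ) ⊆ A, rfl⟩, ?_⟩
  intro μ hμ hμI
  have hSnull : ∀ᵐ z ∂μ, z ∉ S := by
    rw [ae_iff]
    simpa using S.finite_toSet.measure_zero μ
  have hInull : ∀ᵐ z ∂μ, z ∈ Set.Icc (0 : ℝ) 1 := hμI
  refine measure_congr ?_
  filter_upwards [hSnull, hInull] with z hzS hzI
  refine propext ⟨fun hz => ?_, fun hz => ?_⟩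
  · obtain ⟨i, hi, hzi⟩ := Set.mem_iUnion₂.1 hz
    refine (Finset.mem_filter.1 hi).2 ⟨lt_of_le_of_ne hzi.1 ?_, lt_of_le_of_ne hzi.2 ?_⟩
    · intro h; exact hzS (h ▸ hymem _)
    · intro h; exact hzS (h ▸ hymem _)
  · obtain ⟨i, hi⟩ := hcover z hzI hzS
    exact Set.mem_iUnion₂.2 ⟨i, Finset.mem_filter.2 ⟨Finset.mem_univ _, hdich i z hi hz⟩,
      Set.Ioo_subset_Icc_self hi⟩

end Conclusion

end ICD

/-- For every rational `α ∈ (0,1)` there is a constant `c > 0`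
(depending only on `α`) such that for every `n ≥ 1` and all step-function probability
measures `μ_1, ..., μ_n` on `[0,1]`, a set achievable with at most `(2 − c)·n` cuts
exists on which every measure takes value exactly `α`. -/
theorem icd_upper_bound_rational
    (α : ℚ) (h0 : 0 < α) (h1 : α < 1) :
    ∃ c : ℝ, 0 < c ∧
      ∀ (n : ℕ), 0 < n →
        ∀ μ : Fin n → Measure ℝ, (∀ i, IsStepMeasure (μ i)) →
          ∃ (m : ℕ) (A : Set ℝ),
            (m : ℝ) ≤ (2 - c) * (n : ℝ) ∧
            AchievableWithCuts m A ∧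
            ∀ i, μ i A = ENNReal.ofReal (α : ℝ) := by
  have hα : (α : ℝ) = (α.num.toNat : ℝ) / α.den := by
    have h2 : ((α.num.toNat : ℕ) : ℤ) = α.num := Int.toNat_of_nonneg (Rat.num_pos.2 h0).le
    have h3 : ((α.num.toNat : ℕ) : ℝ) = (α.num : ℝ) := by exact_mod_cast congrArg (Int.cast (R := ℝ)) h2
    rw [h3]
    exact Rat.cast_def α
  have hnum : 0 < α.num.toNat := by
    have := Rat.num_pos.2 h0
    omega
  have hle : α.num.toNat ≤ α.den := by
    have := Rat.num_lt_denom_iff.2 h1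
    omega
  obtain ⟨c, hc, h⟩ := ICD.goodRatio_div _ _ hnum hle
  refine ⟨c, hc, fun n _ μ hμ => ?_⟩
  obtain ⟨A, hA, E, hE, hcard, hAα⟩ := h n μ (fun i => (hμ i).1)
    (fun i => ICD.IsStepMeasure.nullSingleton (hμ i)) (fun i => ICD.IsStepMeasure.compl_Icc (hμ i))
  obtain ⟨m, hm, B, hB, hBA⟩ := ICD.exists_achievable A hA E hE
  refine ⟨m, B, (Nat.cast_le.2 hm).trans hcard, hB, fun i => ?_⟩
  have := (hμ i).1
  rw [hBA (μ i) (ICD.IsStepMeasure.nullSingleton (hμ i)) (ICD.IsStepMeasure.compl_Icc (hμ i)), hα,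
    ← hAα i, ofReal_measureReal]
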